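/- Let M = V ∪_S W be the standard genus three Heegaard splitting of the 3-torus, D the meridian disk q({z = 1/2} ∩ C) ∩ V, and E the meridian disk q({z = 0} ∩ C) ∩ W. Cutting V along D yields a genus two handlebody V′ in which ∂E separates ∂V′ into two once-punctured tori T₁ and T₂, and V′ is homeomorphic to T₁ × I. -/

import Mathlib

/-!
The whole proof takes place in coordinates. In `T³ = ℝ³/(2ℤ)³` the set `V` consists of the points
two of whose coordinates are within `1/4` of `0`, and `V'` is the product of a plus-shaped
neighborhood of the two coordinate circles of the torus with `[-1/4, 1/4]` (the thickened cross),
with a finger `[-1/4, 1/4]² × [-5/4, -1/4]` hanging below its centre. The curve `∂E` is the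
horizontal curve at height `0` on the vertical sides of the cross, so the two pieces of `∂V'` are
its upper and lower halves `T1lift`, `T2lift` (`T1_union_T2`, `T1_inter_T2`).

A radial stretch about `(0, 0, 1/4)` pushes the finger back into the cross, so that `V'` is
homeomorphic to the thickened cross (`Vcut_homeo_cross`) and `T₂` becomes the mirror image of
`T₁`. The plus-shaped region is the flat torus minus an open square centred at the corner of the
fundamental square; each half of the boundary is this region with a collar added, hence a
once-punctured torus (`T1_punc`, `T2_punc`), and the thickened cross is the product of such a
surface with an interval (`Vcut_homeo_prod`).

That the thickened cross is a handlebody of genus two means that thickening forgets how the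
punctured torus is embedded. The cross is a thickened annulus `|y| ≤ 1/4` with a solid handle
`|x| ≤ 1/4` attached to its two opposite sides. Rotating the square cross-sections of the annulus
and of the handle by a half turn along the way moves both attaching regions to the same side,
without linking; after this untwisting (`bandMap`, `armMap`) the gluing pattern is that of a
*planar* annulus with a planar band on its outer boundary, a rectangle with two holes
(`cross_homeo_planar`). On the other side the sup-metric neighborhood of two tangent circles is
`modelN × [-1/4, 1/4]` (`model_eq_prod`), and each half of `modelN` is a star-shaped annulus that
is carried radially, by means of Minkowski gauges, to one half of the rectangle
(`modelN_homeo_planar`).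

All homeomorphisms are obtained from one principle: two continuous maps from a compact space to
Hausdorff spaces with the same fibres have homeomorphic images (`image_homeo_of_ker`,
`union_homeo_of_ker`).
-/

open Set Metric Topology

noncomputable section

/-- The closed unit disk in the plane. -/
def Disk2 : Set (ℝ × ℝ) := Metric.closedBall 0 1

/-- The unit circle in the plane. -/
def Circle1 : Set (ℝ × ℝ) := Metric.sphere 0 1

variable {X : Type*} [TopologicalSpace X]

/-- `γ` is a simple closed curve (an embedded image of the unit circle). -/
def IsSCC (γ : Set X) : Prop :=
  ∃ f : (ℝ × ℝ) → X, ContinuousOn f Circle1 ∧ Set.InjOn f Circle1 ∧ f '' Circle1 = γ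

/-- The curve `γ` bounds an embedded disk contained in `A`. -/
def BoundsDiskIn (γ A : Set X) : Prop :=
  ∃ f : (ℝ × ℝ) → X, ContinuousOn f Disk2 ∧ Set.InjOn f Disk2 ∧
    f '' Disk2 ⊆ A ∧ f '' Circle1 = γ

/-- `Δ` is a properly embedded disk in `V` whose boundary lies on the surface `S`. -/
def IsProperDisk (Δ V S : Set X) : Prop :=
  ∃ f : (ℝ × ℝ) → X, ContinuousOn f Disk2 ∧ Set.InjOn f Disk2 ∧
    f '' Disk2 = Δ ∧ Δ ⊆ V ∧ f '' Circle1 = Δ ∩ S ∧ f '' (Disk2 \ Circle1) ⊆ V \ S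

/-- `Δ` is an essential disk in `V` (with `∂Δ = Δ ∩ S` an essential curve on `S`,
i.e. `∂Δ` bounds no disk in the surface `S`). -/
def IsEssentialDisk (Δ V S : Set X) : Prop :=
  IsProperDisk Δ V S ∧ ¬ BoundsDiskIn (Δ ∩ S) S

/-- `A` and `B` are ambiently isotopic by an isotopy of `X` preserving `V` setwise. -/
def AmbIsotopicIn (A B V : Set X) : Prop :=
  ∃ F : ℝ → X ≃ₜ X, Continuous (fun p : ℝ × X => F p.1 p.2) ∧
    F 0 = Homeomorph.refl X ∧ (∀ t, (F t) '' V = V) ∧ (F 1) '' A = B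

/-- The isotopy class of the curve `γ` bounds an essential disk in `V`
(i.e. `γ` is a vertex of the subcomplex `D_V(S)` of the disk complex). -/
def InDiskSet (γ V S : Set X) : Prop :=
  ∃ γ' Δ, AmbIsotopicIn γ γ' S ∧ IsEssentialDisk Δ V S ∧ Δ ∩ S = γ'

/-- `γ` represents a vertex of the disk complex `D(S)` of the splitting surface `S`
of `M = V ∪_S W` : an essential simple closed curve in `S` bounding an essential
disk in `V` or in `W` (up to isotopy). -/
def IsVertex (γ V W S : Set X) : Prop :=
  IsSCC γ ∧ γ ⊆ S ∧ ¬ BoundsDiskIn γ S ∧ (InDiskSet γ V S ∨ InDiskSet γ W S)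

/-- Chain of `n` pairwise tangent circles in the plane `z = 0` of `ℝ³`. -/
def chainCircles (n : ℕ) : Set ((ℝ × ℝ) × ℝ) :=
  ⋃ i ∈ Finset.range n, {p | (p.1.1 - 2 * i) ^ 2 + p.1.2 ^ 2 = 1 ∧ p.2 = 0}

/-- A standard model of the genus `n` handlebody in `ℝ³`: a closed regular
neighborhood of a wedge of `n` circles (a closed ball if `n = 0`). -/
def ModelHandlebody (n : ℕ) : Set ((ℝ × ℝ) × ℝ) :=
  if n = 0 then Metric.closedBall 0 1 else Metric.cthickening (1 / 4) (chainCircles n)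

/-- `A` is a handlebody of genus `n`. -/
def IsHandlebody (A : Set X) (n : ℕ) : Prop := Nonempty (A ≃ₜ ModelHandlebody n)

/-- The splitting surface `S` of `M = V ∪_S W` is critical: the vertices of the disk
complex `D(S)` can be partitioned into `C0` and `C1` such that (1) for each `i` there is
a pair of disjoint essential disks on the two sides with boundaries in `C i`, and (2)
a disk in `D_V(S) ∩ C i` and a disk in `D_W(S) ∩ C (1-i)` always intersect,
for any representatives. -/
def IsCriticalSurface (V W S : Set X) : Prop :=
  ∃ C0 C1 : Set (Set X),
    Disjoint C0 C1 ∧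
    (∀ γ, IsVertex γ V W S ↔ γ ∈ C0 ∪ C1) ∧
    (∃ ΔV ΔW, IsEssentialDisk ΔV V S ∧ IsEssentialDisk ΔW W S ∧
      (ΔV ∩ S) ∈ C0 ∧ (ΔW ∩ S) ∈ C0 ∧ Disjoint ΔV ΔW) ∧
    (∃ ΔV ΔW, IsEssentialDisk ΔV V S ∧ IsEssentialDisk ΔW W S ∧
      (ΔV ∩ S) ∈ C1 ∧ (ΔW ∩ S) ∈ C1 ∧ Disjoint ΔV ΔW) ∧
    (∀ γV γW, γV ∈ C0 → InDiskSet γV V S → γW ∈ C1 → InDiskSet γW W S →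
      ∀ γV' γW', AmbIsotopicIn γV γV' S → AmbIsotopicIn γW γW' S → ¬ Disjoint γV' γW') ∧
    (∀ γV γW, γV ∈ C1 → InDiskSet γV V S → γW ∈ C0 → InDiskSet γW W S →
      ∀ γV' γW', AmbIsotopicIn γV γV' S → AmbIsotopicIn γW γW' S → ¬ Disjoint γV' γW')


/-- The 3-torus, as the quotient `ℝ³/(2ℤ)³` (i.e. the cube `[-1,1]³` with opposite
faces identified). -/
abbrev T3 : Type := AddCircle (2 : ℝ) × AddCircle (2 : ℝ) × AddCircle (2 : ℝ)

/-- The quotient map `q : ℝ³ → T³` (restricting to the cube `C = [-1,1]³`, it is the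
map identifying the three pairs of opposite faces of `C`). -/
def qT : ℝ × ℝ × ℝ → T3 :=
  fun p => ((p.1 : AddCircle (2 : ℝ)), (p.2.1 : AddCircle (2 : ℝ)), (p.2.2 : AddCircle (2 : ℝ)))

/-- The cube `C = [-1,1]³`. -/
def Cube : Set (ℝ × ℝ × ℝ) :=
  {p | p.1 ∈ Icc (-1 : ℝ) 1 ∧ p.2.1 ∈ Icc (-1 : ℝ) 1 ∧ p.2.2 ∈ Icc (-1 : ℝ) 1}

/-- The union of the three coordinate axes of `ℝ³`. -/
def Axes : Set (ℝ × ℝ × ℝ) :=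
  {p | p.2.1 = 0 ∧ p.2.2 = 0} ∪ {p | p.1 = 0 ∧ p.2.2 = 0} ∪ {p | p.1 = 0 ∧ p.2.1 = 0}

/-- The genus three handlebody `V`: the image under `q` of a tubular neighborhood of
the union of the three axes in the cube. -/
def Vh : Set T3 := qT '' (Metric.cthickening (1 / 4) Axes ∩ Cube)

/-- The Heegaard surface `S = ∂V`. -/
def Sh : Set T3 := frontier Vh

/-- The complementary genus three handlebody `W = cl(M - V)`. -/
def Wh : Set T3 := closure Vhᶜ

/-- The meridian disk `D = q({z = 1/2} ∩ C) ∩ V` of `V`. -/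
def Dd : Set T3 := qT '' ({p | p.2.2 = 1 / 2} ∩ Cube) ∩ Vh

/-- The meridian disk `E = q({z = 0} ∩ C) ∩ W` of `W`. -/
def Ee : Set T3 := qT '' ({p | p.2.2 = 0} ∩ Cube) ∩ Wh

/-- The meridian disk `D' = q({x = 1/2} ∩ C) ∩ V` of `V`. -/
def Dd' : Set T3 := qT '' ({p | p.1 = 1 / 2} ∩ Cube) ∩ Vh

/-- The meridian disk `E' = q({x = 0} ∩ C) ∩ W` of `W`. -/
def Ee' : Set T3 := qT '' ({p | p.1 = 0} ∩ Cube) ∩ Wh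

/-- The quotient map `ℝ² → (flat torus)` for the square `[-1,1]²` with opposite
sides identified. -/
def qT2 : ℝ × ℝ → AddCircle (2 : ℝ) × AddCircle (2 : ℝ) :=
  fun p => ((p.1 : AddCircle (2 : ℝ)), (p.2 : AddCircle (2 : ℝ)))

/-- A standard model of the once-punctured torus: the flat torus with an open
square disk removed. -/
def PuncTorusModel : Set (AddCircle (2 : ℝ) × AddCircle (2 : ℝ)) :=
  qT2 '' {p | p.1 ∈ Icc (-1 : ℝ) 1 ∧ p.2 ∈ Icc (-1 : ℝ) 1 ∧ (1 / 4 ≤ |p.1| ∨ 1 / 4 ≤ |p.2|)}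

/-- `A` is a once-punctured torus. -/
def IsOncePuncturedTorus {X : Type*} [TopologicalSpace X] (A : Set X) : Prop :=
  Nonempty (A ≃ₜ PuncTorusModel)

/-- An open product neighborhood `D × (-1,1)` of the meridian disk `D ⊂ V`
(at the level `z = 1/2`). -/
def NbhdD : Set T3 := qT '' ({p | 1 / 4 < p.2.2 ∧ p.2.2 < 3 / 4} ∩ Cube) ∩ Vh

/-- The result `V'` of cutting the handlebody `V` along the meridian disk `D`. -/
def Vcut : Set T3 := Vh \ NbhdD

/-- The boundary circle `∂E` of the meridian disk `E` of `W`. -/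
def bdE : Set T3 := Ee ∩ Sh

/-! ### Homeomorphic images of a compact space -/

/-- A continuous map which is constant on the fibres of `f` descends to the image of `f`. -/
theorem descend_of_ker {K A B : Type*} [TopologicalSpace K] [CompactSpace K]
    [TopologicalSpace A] [T2Space A] [TopologicalSpace B]
    {f : K → A} {g : K → B} (hf : Continuous f) (hg : Continuous g)
    (h : ∀ a b, f a = f b → g a = g b) :
    ∃ F : range f → range g, Continuous F ∧ ∀ k, F ⟨f k, k, rfl⟩ = ⟨g k, k, rfl⟩ := by
  have hF : ∀ y : range f, ∃ z : range g, ∀ k, f k = y → g k = z := by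
    rintro ⟨y, k, rfl⟩
    exact ⟨⟨g k, k, rfl⟩, fun k' hk' => h _ _ hk'⟩
  choose F hF using hF
  have hFk : ∀ k, F ⟨f k, k, rfl⟩ = ⟨g k, k, rfl⟩ := fun k =>
    Subtype.ext (hF ⟨f k, k, rfl⟩ k rfl).symm
  refine ⟨F, ?_, hFk⟩
  have hq : IsQuotientMap (rangeFactorization f) :=
    (hf.subtype_mk _).isClosedMap.isQuotientMap (hf.subtype_mk _) rangeFactorization_surjective
  rw [hq.continuous_iff]
  have : F ∘ rangeFactorization f = rangeFactorization g := funext hFk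
  rw [this]
  exact hg.subtype_mk _

/-- Two continuous maps on a compact space which identify the same pairs of points have
homeomorphic images. -/
theorem range_homeo_of_ker {K A B : Type*} [TopologicalSpace K] [CompactSpace K]
    [TopologicalSpace A] [T2Space A] [TopologicalSpace B] [T2Space B]
    {f : K → A} {g : K → B} (hf : Continuous f) (hg : Continuous g)
    (h : ∀ a b, f a = f b ↔ g a = g b) : Nonempty (range f ≃ₜ range g) := by
  obtain ⟨F, hFc, hF⟩ := descend_of_ker hf hg (fun a b => (h a b).1)
  obtain ⟨G, hGc, hG⟩ := descend_of_ker hg hf (fun a b => (h a b).2)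
  refine ⟨⟨⟨F, G, ?_, ?_⟩, hFc, hGc⟩⟩
  · rintro ⟨_, k, rfl⟩; rw [hF, hG]
  · rintro ⟨_, k, rfl⟩; rw [hG, hF]

/-- Set version of `range_homeo_of_ker`. -/
theorem image_homeo_of_ker {K A B : Type*} [TopologicalSpace K]
    [TopologicalSpace A] [T2Space A] [TopologicalSpace B] [T2Space B]
    {s : Set K} (hs : IsCompact s) {f : K → A} {g : K → B}
    (hf : ContinuousOn f s) (hg : ContinuousOn g s)
    (h : ∀ a ∈ s, ∀ b ∈ s, f a = f b ↔ g a = g b) : Nonempty ((f '' s) ≃ₜ (g '' s)) := by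
  have := isCompact_iff_compactSpace.1 hs
  rw [← range_domRestrict f s, ← range_domRestrict g s]
  exact range_homeo_of_ker (continuousOn_iff_continuous_domRestrict.1 hf)
    (continuousOn_iff_continuous_domRestrict.1 hg) (fun a b => h a a.2 b b.2)

/-- Version of `range_homeo_of_ker` for a disjoint union of two compact pieces. -/
theorem union_homeo_of_ker {K L A B : Type*} [TopologicalSpace K] [TopologicalSpace L]
    [TopologicalSpace A] [T2Space A] [TopologicalSpace B] [T2Space B]
    {s : Set K} {t : Set L} (hs : IsCompact s) (ht : IsCompact t)
    {f₁ : K → A} {f₂ : L → A} {g₁ : K → B} {g₂ : L → B}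
    (hf₁ : ContinuousOn f₁ s) (hf₂ : ContinuousOn f₂ t)
    (hg₁ : ContinuousOn g₁ s) (hg₂ : ContinuousOn g₂ t)
    (h₁ : ∀ a ∈ s, ∀ b ∈ s, f₁ a = f₁ b ↔ g₁ a = g₁ b)
    (h₂ : ∀ a ∈ t, ∀ b ∈ t, f₂ a = f₂ b ↔ g₂ a = g₂ b)
    (h₁₂ : ∀ a ∈ s, ∀ b ∈ t, f₁ a = f₂ b ↔ g₁ a = g₂ b) :
    Nonempty ((f₁ '' s ∪ f₂ '' t : Set A) ≃ₜ (g₁ '' s ∪ g₂ '' t : Set B)) := by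
  have := isCompact_iff_compactSpace.1 hs
  have := isCompact_iff_compactSpace.1 ht
  have e₁ : f₁ '' s ∪ f₂ '' t = range (Sum.elim (s.domRestrict f₁) (t.domRestrict f₂)) := by
    rw [Sum.elim_range, range_domRestrict, range_domRestrict]
  have e₂ : g₁ '' s ∪ g₂ '' t = range (Sum.elim (s.domRestrict g₁) (t.domRestrict g₂)) := by
    rw [Sum.elim_range, range_domRestrict, range_domRestrict]
  rw [e₁, e₂]
  refine range_homeo_of_ker
    ((continuousOn_iff_continuous_domRestrict.1 hf₁).sumElim
      (continuousOn_iff_continuous_domRestrict.1 hf₂))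
    ((continuousOn_iff_continuous_domRestrict.1 hg₁).sumElim
      (continuousOn_iff_continuous_domRestrict.1 hg₂)) ?_
  rintro (a | a) (b | b)
  · exact h₁ a a.2 b b.2
  · exact h₁₂ a a.2 b b.2
  · simp only [Sum.elim_inr, Sum.elim_inl]
    rw [eq_comm, @eq_comm _ (t.domRestrict g₂ a)]
    exact h₁₂ b b.2 a a.2
  · exact h₂ a a.2 b b.2

/-- A bounded vector field times a scalar is continuous if the field is continuous wherever the
scalar does not vanish. -/
theorem continuous_smul_of_bounded {A E : Type*} [TopologicalSpace A] [NormedAddCommGroup E]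
    [NormedSpace ℝ E] {F : A → ℝ} {v : A → E} {C : ℝ} (hF : Continuous F)
    (hb : ∀ a, ‖v a‖ ≤ C) (hv : ∀ a, F a ≠ 0 → ContinuousAt v a) :
    Continuous (fun a => F a • v a) := by
  rw [continuous_iff_continuousAt]
  intro a
  by_cases h : F a = 0
  · rw [ContinuousAt, h, zero_smul]
    refine squeeze_zero_norm (a := fun x => |F x| * C) (fun x => ?_) ?_
    · rw [norm_smul, Real.norm_eq_abs]
      exact mul_le_mul_of_nonneg_left (hb x) (abs_nonneg _)
    · have hc : Continuous (fun x => |F x| * C) := by fun_prop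
      simpa [h] using hc.tendsto a
  · exact hF.continuousAt.smul (hv a h)

/-! ### Coordinates on the circle `ℝ/2ℤ` -/

theorem circ_eq_iff {x y : ℝ} : (x : AddCircle (2 : ℝ)) = y ↔ ∃ n : ℤ, x = y + 2 * n := by
  rw [← sub_eq_zero, ← AddCircle.coe_sub, AddCircle.coe_eq_zero_iff]
  constructor
  · rintro ⟨n, hn⟩; exact ⟨n, by rw [zsmul_eq_mul] at hn; linarith⟩
  · rintro ⟨n, hn⟩; exact ⟨n, by rw [zsmul_eq_mul]; linarith⟩

theorem circ_eq_of_lt {x y : ℝ} (h : (x : AddCircle (2 : ℝ)) = y) (h1 : x - y < 2)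
    (h2 : y - x < 2) : x = y := by
  obtain ⟨n, hn⟩ := circ_eq_iff.1 h
  have a1 : n < 1 := by
    have : (n : ℝ) < 1 := by linarith
    exact_mod_cast this
  have a2 : -1 < n := by
    have : (-1 : ℝ) < n := by linarith
    exact_mod_cast this
  have : n = 0 := by omega
  subst this; simpa using hn

theorem circ_add_two (x : ℝ) : ((x + 2 : ℝ) : AddCircle (2 : ℝ)) = x :=
  circ_eq_iff.2 ⟨1, by push_cast; ring⟩

/-- Two points of `[-1,1]` agree on the circle iff they are equal or both are endpoints. -/
theorem circ_eq_iff_unit {x y : ℝ} (hx : |x| ≤ 1) (hy : |y| ≤ 1) :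
    (x : AddCircle (2 : ℝ)) = y ↔ x = y ∨ (|x| = 1 ∧ |y| = 1) := by
  rw [abs_le] at hx hy
  constructor
  · intro h
    by_cases h1 : x - y < 2
    · by_cases h2 : y - x < 2
      · exact Or.inl (circ_eq_of_lt h h1 h2)
      · right
        have : x = -1 := by linarith
        have : y = 1 := by linarith
        subst x; subst y; norm_num
    · right
      have : y = -1 := by linarith
      have : x = 1 := by linarith
      subst x; subst y; norm_num
  · rintro (rfl | ⟨h1, h2⟩)
    · rfl
    · rcases eq_or_eq_neg_of_abs_eq h1 with rfl | rfl <;>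
      rcases eq_or_eq_neg_of_abs_eq h2 with rfl | rfl
      · rfl
      · rw [← circ_add_two (-1)]; norm_num
      · rw [← circ_add_two (-1)]; norm_num
      · rfl

theorem circ_abs_eq {x y : ℝ} (hx : |x| ≤ 1) (hy : |y| ≤ 1)
    (h : (x : AddCircle (2 : ℝ)) = y) : |x| = |y| := by
  rcases (circ_eq_iff_unit hx hy).1 h with h | h
  · rw [h]
  · rw [h.1, h.2]

theorem circ_norm {x : ℝ} (hx : |x| ≤ 1) : ‖(x : AddCircle (2 : ℝ))‖ = |x| := by
  rw [AddCircle.norm_coe_eq_abs_iff _ (by norm_num)]; norm_num; exact hx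

/-- Every point of the circle has a representative in a given closed interval of length `2`. -/
theorem circ_lift (a : ℝ) (x : AddCircle (2 : ℝ)) :
    ∃ t : ℝ, a ≤ t ∧ t < a + 2 ∧ (t : AddCircle (2 : ℝ)) = x := by
  have : Fact ((0 : ℝ) < 2) := ⟨by norm_num⟩
  have := (AddCircle.equivIco (2 : ℝ) a x).2
  exact ⟨_, this.1, this.2, AddCircle.coe_equivIco⟩

theorem circ_lift_unit (x : AddCircle (2 : ℝ)) :
    ∃ t : ℝ, |t| ≤ 1 ∧ (t : AddCircle (2 : ℝ)) = x := by
  obtain ⟨t, h1, h2, h3⟩ := circ_lift (-1) x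
  exact ⟨t, abs_le.2 ⟨h1, by linarith⟩, h3⟩

theorem continuous_circ : Continuous (fun x : ℝ => (x : AddCircle (2 : ℝ))) :=
  AddCircle.continuous_mk' 2

theorem continuous_qT : Continuous qT := by
  unfold qT
  exact (continuous_circ.comp continuous_fst).prodMk
    ((continuous_circ.comp (continuous_fst.comp continuous_snd)).prodMk
      (continuous_circ.comp (continuous_snd.comp continuous_snd)))

theorem continuous_qT2 : Continuous qT2 := by
  unfold qT2
  exact (continuous_circ.comp continuous_fst).prodMk (continuous_circ.comp continuous_snd)

theorem qT_eq {x y z x' y' z' : ℝ} : qT (x, y, z) = qT (x', y', z') ↔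
    (x : AddCircle (2 : ℝ)) = x' ∧ (y : AddCircle (2 : ℝ)) = y' ∧ (z : AddCircle (2 : ℝ)) = z' := by
  simp [qT, Prod.ext_iff]

/-! ### The handlebodies `V` and `V'` in coordinates, and the frontier of `V'` -/

theorem mem_cthickening_axes {x y z : ℝ} : (x, y, z) ∈ Metric.cthickening (1 / 4) Axes ↔
    (|y| ≤ 1 / 4 ∧ |z| ≤ 1 / 4) ∨ (|x| ≤ 1 / 4 ∧ |z| ≤ 1 / 4) ∨ (|x| ≤ 1 / 4 ∧ |y| ≤ 1 / 4) := by
  have hcl : IsClosed Axes := by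
    unfold Axes
    refine (IsClosed.union ?_ ?_).union ?_ <;>
    · refine IsClosed.inter (isClosed_eq ?_ ?_) (isClosed_eq ?_ ?_) <;> fun_prop
  rw [hcl.cthickening_eq_biUnion_closedBall (by norm_num)]
  simp only [mem_iUnion, mem_closedBall, Prod.dist_eq, exists_prop, Prod.exists, Real.dist_eq,
    max_le_iff]
  constructor
  · rintro ⟨a, b, c, h, h1, h2, h3⟩
    rcases h with (⟨h4, h5⟩ | ⟨h4, h5⟩) | ⟨h4, h5⟩ <;> simp only at h4 h5 <;> subst h4 <;>
      subst h5 <;> simp only [sub_zero] at * <;> tauto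
  · rintro (⟨h1, h2⟩ | ⟨h1, h2⟩ | ⟨h1, h2⟩)
    · exact ⟨x, 0, 0, Or.inl (Or.inl ⟨rfl, rfl⟩), by simp, by simpa only [sub_zero] using h1, by simpa only [sub_zero] using h2⟩
    · exact ⟨0, y, 0, Or.inl (Or.inr ⟨rfl, rfl⟩), by simpa only [sub_zero] using h1, by simp, by simpa only [sub_zero] using h2⟩
    · exact ⟨0, 0, z, Or.inr ⟨rfl, rfl⟩, by simpa only [sub_zero] using h1, by simpa only [sub_zero] using h2, by simp⟩

/-- `V` consists of the points at least two of whose coordinates are within `1/4` of `0`. -/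
theorem mem_Vh {x y z : AddCircle (2 : ℝ)} : (x, y, z) ∈ Vh ↔
    (‖y‖ ≤ 1 / 4 ∧ ‖z‖ ≤ 1 / 4) ∨ (‖x‖ ≤ 1 / 4 ∧ ‖z‖ ≤ 1 / 4) ∨
      (‖x‖ ≤ 1 / 4 ∧ ‖y‖ ≤ 1 / 4) := by
  unfold Vh
  constructor
  · rintro ⟨⟨a, b, c⟩, ⟨h, ha, hb, hc⟩, he⟩
    rw [mem_cthickening_axes] at h
    simp only [qT, Prod.mk.injEq] at he
    obtain ⟨rfl, rfl, rfl⟩ := he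
    rw [circ_norm (abs_le.2 ha), circ_norm (abs_le.2 hb), circ_norm (abs_le.2 hc)]
    exact h
  · intro h
    obtain ⟨a, ha, rfl⟩ := circ_lift_unit x
    obtain ⟨b, hb, rfl⟩ := circ_lift_unit y
    obtain ⟨c, hc, rfl⟩ := circ_lift_unit z
    rw [circ_norm ha, circ_norm hb, circ_norm hc] at h
    exact ⟨(a, b, c), ⟨mem_cthickening_axes.2 h, abs_le.1 ha, abs_le.1 hb, abs_le.1 hc⟩, rfl⟩

theorem circ_norm_gt {w : ℝ} (h1 : 1 / 4 < |w|) (h2 : |w| < 7 / 4) :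
    1 / 4 < ‖(w : AddCircle (2 : ℝ))‖ := by
  by_cases h : |w| ≤ 1
  · rwa [circ_norm h]
  · push Not at h
    rcases lt_abs.1 h with h' | h'
    · rw [abs_lt] at h2
      have : (w : AddCircle (2 : ℝ)) = ((w - 2 : ℝ) : AddCircle (2 : ℝ)) := by
        rw [← circ_add_two (w - 2)]; congr 1; ring
      rw [this, circ_norm (by rw [abs_le]; constructor <;> linarith)]
      rw [lt_abs]; right; linarith
    · rw [abs_lt] at h2
      rw [← circ_add_two w, circ_norm (by rw [abs_le]; constructor <;> linarith)]
      rw [lt_abs]; left; linarith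

theorem circ_norm_le_quarter {z : ℝ} (h : |z| < 7 / 4) :
    ‖(z : AddCircle (2 : ℝ))‖ ≤ 1 / 4 ↔ |z| ≤ 1 / 4 := by
  constructor
  · intro h'
    by_contra h2
    exact absurd (circ_norm_gt (not_le.1 h2) h) (not_lt.2 h')
  · intro h'; rw [circ_norm (by linarith)]; exact h'

theorem circ_norm_lt_quarter {z : ℝ} (h : |z| < 7 / 4) :
    ‖(z : AddCircle (2 : ℝ))‖ < 1 / 4 ↔ |z| < 1 / 4 := by
  constructor
  · intro h'
    have h2 := (circ_norm_le_quarter h).1 h'.le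
    rwa [circ_norm (by linarith)] at h'
  · intro h'; rw [circ_norm (by linarith)]; exact h'

/-- The slab removed from `V` is the set of points whose last coordinate is at distance more
than `3/4` from `-1/2`. -/
theorem mem_Vcut {x y z : AddCircle (2 : ℝ)} : (x, y, z) ∈ Vcut ↔
    (x, y, z) ∈ Vh ∧ ‖z + ((1 / 2 : ℝ) : AddCircle (2 : ℝ))‖ ≤ 3 / 4 := by
  unfold Vcut NbhdD
  rw [mem_sdiff]
  refine and_congr_right fun hV => ?_
  rw [mem_inter_iff]
  simp only [hV, and_true]
  obtain ⟨a, ha, rfl⟩ := circ_lift_unit x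
  obtain ⟨b, hb, rfl⟩ := circ_lift_unit y
  obtain ⟨c, hc1, hc2, rfl⟩ := circ_lift (-3 / 2) z
  rw [← AddCircle.coe_add, circ_norm (abs_le.2 ⟨by linarith, by linarith⟩)]
  constructor
  · intro h
    by_contra h2
    rw [abs_le] at h2
    apply h
    by_cases h3 : c + 1 / 2 ≤ 3 / 4
    · refine ⟨(a, b, c + 2), ⟨⟨?_, ?_⟩, abs_le.1 ha, abs_le.1 hb, ?_, ?_⟩, ?_⟩
      · show 1 / 4 < c + 2; linarith
      · show c + 2 < 3 / 4
        by_contra h4; exact h2 ⟨by linarith, h3⟩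
      · show -1 ≤ c + 2; linarith
      · show c + 2 ≤ 1
        by_contra h4; exact h2 ⟨by linarith, h3⟩
      · simp only [qT, circ_add_two]
    · refine ⟨(a, b, c), ⟨⟨?_, ?_⟩, abs_le.1 ha, abs_le.1 hb, ?_, ?_⟩, rfl⟩ <;> simp only <;>
        linarith
  · rintro h ⟨⟨a', b', c'⟩, ⟨⟨h1, h2⟩, -⟩, he⟩
    rw [abs_le] at h
    simp only [qT, Prod.mk.injEq] at he h1 h2
    obtain ⟨n, hn⟩ := circ_eq_iff.1 he.2.2
    have h3 : (0 : ℝ) < n := by linarith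
    have h4 : (n : ℝ) < 1 := by linarith
    have h3' : 0 < n := by exact_mod_cast h3
    have h4' : n < 1 := by exact_mod_cast h4
    omega

/-- A fundamental domain for `V'`: a thickened cross with a finger hanging below its centre. -/
def Vlift : Set (ℝ × ℝ × ℝ) :=
  {p | |p.1| ≤ 1 ∧ |p.2.1| ≤ 1 ∧ -(5 / 4) ≤ p.2.2 ∧ p.2.2 ≤ 1 / 4 ∧
    (((|p.1| ≤ 1 / 4 ∨ |p.2.1| ≤ 1 / 4) ∧ -(1 / 4) ≤ p.2.2) ∨
      (|p.1| ≤ 1 / 4 ∧ |p.2.1| ≤ 1 / 4))}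

theorem qT_mem_Vcut {x y z : ℝ} (hx : |x| ≤ 1) (hy : |y| ≤ 1) (hz1 : -(3 / 2) ≤ z)
    (hz2 : z ≤ 1 / 2) : qT (x, y, z) ∈ Vcut ↔ (x, y, z) ∈ Vlift := by
  have hz : |z| < 7 / 4 := abs_lt.2 ⟨by linarith, by linarith⟩
  unfold qT
  rw [mem_Vcut, mem_Vh, ← AddCircle.coe_add, circ_norm (x := z + 1 / 2)
    (abs_le.2 ⟨by linarith, by linarith⟩), circ_norm hx, circ_norm hy, circ_norm_le_quarter hz]
  simp only [Vlift, mem_ofPred_eq]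
  rw [abs_le (a := z + 1 / 2), abs_le (a := z)]
  constructor
  · rintro ⟨h1, h2, h3⟩
    refine ⟨hx, hy, by linarith, by linarith, ?_⟩
    tauto
  · rintro ⟨-, -, h1, h2, h3⟩
    refine ⟨?_, by linarith, by linarith⟩
    tauto

theorem Vcut_eq : Vcut = qT '' Vlift := by
  ext ⟨x, y, z⟩
  constructor
  · intro h
    obtain ⟨a, ha, rfl⟩ := circ_lift_unit x
    obtain ⟨b, hb, rfl⟩ := circ_lift_unit y
    obtain ⟨c, hc1, hc2, rfl⟩ := circ_lift (-(3 / 2)) z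
    exact ⟨(a, b, c), (qT_mem_Vcut ha hb hc1 (by linarith)).1 h, rfl⟩
  · rintro ⟨⟨a, b, c⟩, h, he⟩
    rw [← he]
    obtain ⟨h1, h2, h3, h4, -⟩ := id h
    simp only at h1 h2 h3 h4
    exact (qT_mem_Vcut h1 h2 (by linarith) (by linarith)).2 h

theorem isClosed_Vh : IsClosed Vh := by
  have : Vh = {p : T3 | (‖p.2.1‖ ≤ 1 / 4 ∧ ‖p.2.2‖ ≤ 1 / 4) ∨ (‖p.1‖ ≤ 1 / 4 ∧ ‖p.2.2‖ ≤ 1 / 4) ∨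
      (‖p.1‖ ≤ 1 / 4 ∧ ‖p.2.1‖ ≤ 1 / 4)} := by
    ext ⟨x, y, z⟩; exact mem_Vh
  rw [this]
  simp only [ofPred_or, ofPred_and]
  refine IsClosed.union ?_ (IsClosed.union ?_ ?_) <;>
  · refine IsClosed.inter (isClosed_le ?_ ?_) (isClosed_le ?_ ?_) <;> fun_prop

theorem isClosed_Vcut : IsClosed Vcut := by
  have : Vcut = Vh ∩ {p : T3 | ‖p.2.2 + ((1 / 2 : ℝ) : AddCircle (2 : ℝ))‖ ≤ 3 / 4} := by
    ext ⟨x, y, z⟩; exact mem_Vcut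
  rw [this]
  refine isClosed_Vh.inter (isClosed_le ?_ ?_) <;> fun_prop

/-- The points of `V` at least two of whose coordinates are *strictly* within `1/4` of `0`
are interior. -/
def VhOpen : Set T3 := {p : T3 | (‖p.2.1‖ < 1 / 4 ∧ ‖p.2.2‖ < 1 / 4) ∨
  (‖p.1‖ < 1 / 4 ∧ ‖p.2.2‖ < 1 / 4) ∨ (‖p.1‖ < 1 / 4 ∧ ‖p.2.1‖ < 1 / 4)}

theorem isOpen_VhOpen : IsOpen VhOpen := by
  unfold VhOpen
  simp only [ofPred_or, ofPred_and]
  refine IsOpen.union ?_ (IsOpen.union ?_ ?_) <;>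
  · refine IsOpen.inter (isOpen_lt ?_ ?_) (isOpen_lt ?_ ?_) <;> fun_prop

theorem VhOpen_subset : VhOpen ⊆ Vh := by
  rintro ⟨x, y, z⟩ h
  rw [mem_Vh]
  rcases h with h | h | h
  · exact Or.inl ⟨h.1.le, h.2.le⟩
  · exact Or.inr (Or.inl ⟨h.1.le, h.2.le⟩)
  · exact Or.inr (Or.inr ⟨h.1.le, h.2.le⟩)

/-- Every other point of the torus is a limit of points outside `V`: dilating the
coordinates slightly pushes each coordinate of absolute value at least `1/4` beyond `1/4`. -/
theorem mem_closure_compl_Vh {p : T3} (hp : p ∉ VhOpen) : p ∈ closure Vhᶜ := by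
  obtain ⟨x, y, z⟩ := p
  obtain ⟨a, ha, rfl⟩ := circ_lift_unit x
  obtain ⟨b, hb, rfl⟩ := circ_lift_unit y
  obtain ⟨c, hc, rfl⟩ := circ_lift_unit z
  have hlim : Filter.Tendsto (fun e : ℝ => qT ((1 + e) * a, (1 + e) * b, (1 + e) * c)) (𝓝[>] 0)
      (𝓝 (qT (a, b, c))) := by
    have hc : Continuous (fun e : ℝ => qT ((1 + e) * a, (1 + e) * b, (1 + e) * c)) :=
      continuous_qT.comp (by fun_prop)
    have := (hc.tendsto 0).mono_left (nhdsWithin_le_nhds (s := Ioi 0))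
    simpa using this
  refine mem_closure_of_tendsto hlim ?_
  filter_upwards [Ioo_mem_nhdsGT (show (0 : ℝ) < 1 / 2 by norm_num)] with e he
  have key : ∀ w : ℝ, |w| ≤ 1 → ¬ ‖(w : AddCircle (2 : ℝ))‖ < 1 / 4 →
      ¬ ‖(((1 + e) * w : ℝ) : AddCircle (2 : ℝ))‖ ≤ 1 / 4 := by
    intro w h1 h2
    rw [circ_norm h1] at h2
    rw [not_le]
    have h3 : |(1 + e) * w| = (1 + e) * |w| := by
      rw [abs_mul, abs_of_pos (by linarith [he.1])]
    apply circ_norm_gt <;> rw [h3] <;> nlinarith [he.1, he.2]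
  have k1 := key a ha
  have k2 := key b hb
  have k3 := key c hc
  simp only [VhOpen, mem_ofPred_eq] at hp
  rw [mem_compl_iff, qT, mem_Vh]
  tauto

theorem frontier_Vh : frontier Vh = Vh \ VhOpen := by
  rw [isClosed_Vh.frontier_eq]
  congr 1
  apply Subset.antisymm
  · intro p hp
    by_contra h
    have := mem_closure_compl_Vh h
    rw [closure_compl] at this
    exact this hp
  · exact interior_maximal VhOpen_subset isOpen_VhOpen

theorem frontier_Vcut : frontier Vcut = Vcut \
    (VhOpen ∩ {p : T3 | ‖p.2.2 + ((1 / 2 : ℝ) : AddCircle (2 : ℝ))‖ < 3 / 4}) := by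
  rw [isClosed_Vcut.frontier_eq]
  congr 1
  apply Subset.antisymm
  · intro p hp
    refine ⟨?_, ?_⟩
    · by_contra h
      have := closure_mono (compl_subset_compl.2 (sdiff_subset : Vcut ⊆ Vh))
        (mem_closure_compl_Vh h)
      rw [closure_compl] at this
      exact this hp
    · by_contra h
      have h2 : p ∈ closure Vcutᶜ := by
        obtain ⟨x, y, z⟩ := p
        obtain ⟨a, ha, rfl⟩ := circ_lift_unit x
        obtain ⟨b, hb, rfl⟩ := circ_lift_unit y
        obtain ⟨c, hc1, hc2, rfl⟩ := circ_lift (-(3 / 2)) z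
        have hc : |c + 1 / 2| ≤ 1 := abs_le.2 ⟨by linarith, by linarith⟩
        have hcV := (mem_Vcut.1 (interior_subset hp)).2
        rw [mem_ofPred_eq] at h
        simp only at h
        rw [← AddCircle.coe_add, circ_norm hc] at h hcV
        have hlim : Filter.Tendsto (fun e : ℝ => qT (a, b, c + e * (c + 1 / 2))) (𝓝[>] 0)
            (𝓝 (qT (a, b, c))) := by
          have hc : Continuous (fun e : ℝ => qT (a, b, c + e * (c + 1 / 2))) :=
            continuous_qT.comp (by fun_prop)
          have := (hc.tendsto 0).mono_left (nhdsWithin_le_nhds (s := Ioi 0))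
          simpa using this
        refine mem_closure_of_tendsto hlim ?_
        filter_upwards [Ioo_mem_nhdsGT (show (0 : ℝ) < 1 / 4 by norm_num)] with e he
        rw [mem_compl_iff, qT, mem_Vcut, not_and]
        intro _
        have h3 : |c + e * (c + 1 / 2) + 1 / 2| = (1 + e) * |c + 1 / 2| := by
          rw [show c + e * (c + 1 / 2) + 1 / 2 = (1 + e) * (c + 1 / 2) by ring, abs_mul,
            abs_of_pos (by linarith [he.1])]
        simp only
        rw [← AddCircle.coe_add, circ_norm, h3] <;> nlinarith [he.1, he.2]
      rw [closure_compl] at h2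
      exact h2 hp
  · refine interior_maximal ?_ (isOpen_VhOpen.inter (isOpen_lt ?_ ?_))
    · rintro ⟨x, y, z⟩ ⟨h1, h2⟩
      rw [mem_Vcut]
      exact ⟨VhOpen_subset h1, le_of_lt h2⟩
    · fun_prop
    · fun_prop

/-- Fundamental domain for the upper half `T₁` of `∂V'`. -/
def T1lift : Set (ℝ × ℝ × ℝ) :=
  {p | |p.1| ≤ 1 ∧ |p.2.1| ≤ 1 ∧ ((p.2.2 = 1 / 4 ∧ min |p.1| |p.2.1| ≤ 1 / 4) ∨
    (0 ≤ p.2.2 ∧ p.2.2 ≤ 1 / 4 ∧ min |p.1| |p.2.1| = 1 / 4))}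

/-- Fundamental domain for the lower half `T₂` of `∂V'`: a collar of `∂E`, the bottom of the
thickened cross outside of the finger, and the sides and the bottom of the finger. -/
def T2lift : Set (ℝ × ℝ × ℝ) :=
  {p | |p.1| ≤ 1 ∧ |p.2.1| ≤ 1 ∧ ((-(1 / 4) ≤ p.2.2 ∧ p.2.2 ≤ 0 ∧ min |p.1| |p.2.1| = 1 / 4) ∨
    (p.2.2 = -(1 / 4) ∧ min |p.1| |p.2.1| ≤ 1 / 4 ∧ 1 / 4 ≤ max |p.1| |p.2.1|) ∨
    (-(5 / 4) ≤ p.2.2 ∧ p.2.2 ≤ -(1 / 4) ∧ max |p.1| |p.2.1| = 1 / 4) ∨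
    (p.2.2 = -(5 / 4) ∧ max |p.1| |p.2.1| ≤ 1 / 4))}

theorem qT_mem_frontier {x y z : ℝ} (hx : |x| ≤ 1) (hy : |y| ≤ 1) (hz1 : -(3 / 2) ≤ z)
    (hz2 : z ≤ 1 / 2) : qT (x, y, z) ∈ frontier Vcut ↔ (x, y, z) ∈ T1lift ∪ T2lift := by
  have hz : |z| < 7 / 4 := abs_lt.2 ⟨by linarith, by linarith⟩
  rw [frontier_Vcut, mem_sdiff, qT_mem_Vcut hx hy hz1 hz2]
  simp only [qT, VhOpen, mem_inter_iff, mem_ofPred_eq]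
  rw [← AddCircle.coe_add, circ_norm (x := z + 1 / 2)
    (abs_le.2 ⟨by linarith, by linarith⟩), circ_norm hx, circ_norm hy, circ_norm_lt_quarter hz]
  simp only [Vlift, T1lift, T2lift, mem_union, mem_ofPred_eq, hx, hy, true_and]
  rw [abs_lt (a := z + 1 / 2), abs_lt (a := z)]
  generalize |x| = a
  generalize |y| = b
  constructor
  · rintro ⟨⟨h1, h2, h3⟩, h4⟩
    by_cases e1 : z = 1 / 4
    · left; left; refine ⟨e1, ?_⟩; grind
    by_cases e2 : z = -(5 / 4)
    · right; right; right; right; refine ⟨e2, ?_⟩; grind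
    by_cases e3 : 0 ≤ z
    · left; right; refine ⟨e3, h2, ?_⟩; grind
    right
    by_cases e4 : -(1 / 4) < z
    · left; refine ⟨e4.le, by linarith, ?_⟩; grind
    right
    by_cases e5 : z = -(1 / 4)
    · left; refine ⟨e5, ?_⟩; grind
    · right; left; refine ⟨h1, by linarith, ?_⟩; grind
  · rintro ((⟨h1, h2⟩ | ⟨h1, h2, h3⟩) | ⟨h1, h2, h3⟩ | ⟨h1, h2, h3⟩ | ⟨h1, h2, h3⟩ | ⟨h1, h2⟩)
    all_goals grind (splits := 30)

theorem T1_union_T2 : qT '' T1lift ∪ qT '' T2lift = frontier Vcut := by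
  rw [← image_union]
  ext ⟨x, y, z⟩
  constructor
  · rintro ⟨⟨a, b, c⟩, h, he⟩
    rw [← he]
    have : |a| ≤ 1 ∧ |b| ≤ 1 ∧ -(3 / 2) ≤ c ∧ c ≤ 1 / 2 := by
      rcases h with ⟨h1, h2, h⟩ | ⟨h1, h2, h⟩ <;> simp only at h1 h2 h <;>
        refine ⟨h1, h2, ?_⟩
      · rcases h with ⟨h3, -⟩ | ⟨h3, h4, -⟩ <;> constructor <;> linarith
      · rcases h with ⟨h3, h4, -⟩ | ⟨h3, -⟩ | ⟨h3, h4, -⟩ | ⟨h3, -⟩ <;> constructor <;> linarith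
    exact (qT_mem_frontier this.1 this.2.1 this.2.2.1 this.2.2.2).2 h
  · intro h
    obtain ⟨a, ha, rfl⟩ := circ_lift_unit x
    obtain ⟨b, hb, rfl⟩ := circ_lift_unit y
    obtain ⟨c, hc1, hc2, rfl⟩ := circ_lift (-(3 / 2)) z
    exact ⟨(a, b, c), (qT_mem_frontier ha hb hc1 (by linarith)).1 h, rfl⟩

/-- `∂E` is the curve at height `0` on which the smaller of the other two coordinates
is `1/4` in absolute value. -/
theorem mem_bdE {x y z : ℝ} (hx : |x| ≤ 1) (hy : |y| ≤ 1) (hz1 : -(3 / 2) ≤ z)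
    (hz2 : z ≤ 1 / 2) : qT (x, y, z) ∈ bdE ↔ z = 0 ∧ min |x| |y| = 1 / 4 := by
  have hS : Sh ⊆ Wh := by
    unfold Sh Wh
    rw [frontier_eq_closure_inter_closure]
    exact inter_subset_right
  have h0 : qT (x, y, z) ∈ bdE ↔ z = 0 ∧ qT (x, y, z) ∈ Sh := by
    unfold bdE Ee
    constructor
    · rintro ⟨⟨⟨⟨a, b, c⟩, ⟨h1, -⟩, he⟩, -⟩, h2⟩
      refine ⟨?_, h2⟩
      rw [qT_eq] at he
      simp only [mem_ofPred_eq] at h1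
      subst h1
      exact (circ_eq_of_lt he.2.2 (by linarith) (by linarith)).symm
    · rintro ⟨rfl, h2⟩
      exact ⟨⟨⟨(x, y, 0), ⟨rfl, abs_le.1 hx, abs_le.1 hy, by norm_num⟩, rfl⟩, hS h2⟩, h2⟩
  rw [h0]
  refine and_congr_right ?_
  rintro rfl
  rw [Sh, frontier_Vh, mem_sdiff, qT, mem_Vh]
  simp only [VhOpen, mem_ofPred_eq]
  rw [circ_norm hx, circ_norm hy, circ_norm (by norm_num), abs_zero]
  generalize |x| = a
  generalize |y| = b
  grind

theorem T1_inter_T2 : qT '' T1lift ∩ qT '' T2lift = bdE := by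
  ext ⟨x, y, z⟩
  constructor
  · rintro ⟨⟨⟨a, b, c⟩, h, he⟩, ⟨⟨a', b', c'⟩, h', he'⟩⟩
    rw [← he] at he' ⊢
    rw [qT_eq] at he'
    simp only [T1lift, T2lift, mem_ofPred_eq] at h h'
    have e1 := circ_abs_eq h'.1 h.1 he'.1
    have e2 := circ_abs_eq h'.2.1 h.2.1 he'.2.1
    have e3 := circ_eq_of_lt he'.2.2 (by grind) (by grind)
    rw [e1, e2, e3] at h'
    have hc1 : -(3 / 2) ≤ c := by grind
    have hc2 : c ≤ 1 / 2 := by grind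
    rw [mem_bdE h.1 h.2.1 hc1 hc2]
    grind
  · intro h
    obtain ⟨a, ha, rfl⟩ := circ_lift_unit x
    obtain ⟨b, hb, rfl⟩ := circ_lift_unit y
    obtain ⟨c, hc1, hc2, rfl⟩ := circ_lift (-(3 / 2)) z
    obtain ⟨rfl, h2⟩ := (mem_bdE ha hb hc1 (by linarith)).1 h
    exact ⟨⟨(a, b, 0), ⟨ha, hb, Or.inr ⟨le_rfl, by norm_num, h2⟩⟩, rfl⟩,
      ⟨(a, b, 0), ⟨ha, hb, Or.inl ⟨by norm_num, le_rfl, h2⟩⟩, rfl⟩⟩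

/-! ### Pushing the finger of `V'` back into the thickened cross -/

/-- The norm about `(0, 0, 1/4)` whose unit ball is twice as high as the central cube of the
thickened cross; its lower half is that cube. -/
def fingS (p : ℝ × ℝ × ℝ) : ℝ := max (max (4 * |p.1|) (4 * |p.2.1|)) (2 * |p.2.2 - 1 / 4|)

/-- The norm about `(0, 0, 1/4)` the lower half of whose unit ball is the central cube together
with the finger. -/
def fingS' (p : ℝ × ℝ × ℝ) : ℝ := max (max (4 * |p.1|) (4 * |p.2.1|)) (2 / 3 * |p.2.2 - 1 / 4|)

/-- The homothety of ratio `k` about `(0, 0, 1/4)`. -/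
def homoth (k : ℝ) (p : ℝ × ℝ × ℝ) : ℝ × ℝ × ℝ :=
  (k * p.1, k * p.2.1, 1 / 4 + k * (p.2.2 - 1 / 4))

/-- Radial stretching carrying the thickened cross to `Vlift`. -/
def fingG (p : ℝ × ℝ × ℝ) : ℝ × ℝ × ℝ := homoth (fingS p / fingS' p) p

/-- The inverse of `fingG`. -/
def fingH (p : ℝ × ℝ × ℝ) : ℝ × ℝ × ℝ := homoth (fingS' p / fingS p) p

/-- A fundamental domain for the product of the cross in the torus with `[-1/4, 1/4]`. -/
def Klift : Set (ℝ × ℝ × ℝ) :=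
  {p | |p.1| ≤ 1 ∧ |p.2.1| ≤ 1 ∧ |p.2.2| ≤ 1 / 4 ∧ (|p.1| ≤ 1 / 4 ∨ |p.2.1| ≤ 1 / 4)}

/-- The preimage of `T2lift` under `fingG`. -/
def T2flat : Set (ℝ × ℝ × ℝ) :=
  {p | |p.1| ≤ 1 ∧ |p.2.1| ≤ 1 ∧ ((p.2.2 = -(1 / 4) ∧ min |p.1| |p.2.1| ≤ 1 / 4) ∨
    (-(1 / 4) ≤ p.2.2 ∧ p.2.2 ≤ 0 ∧ min |p.1| |p.2.1| = 1 / 4))}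

theorem fingS_homoth {k : ℝ} (hk : 0 ≤ k) (p : ℝ × ℝ × ℝ) :
    fingS (homoth k p) = k * fingS p ∧ fingS' (homoth k p) = k * fingS' p := by
  unfold fingS fingS' homoth
  simp only [add_sub_cancel_left, abs_mul, abs_of_nonneg hk, mul_max_of_nonneg _ _ hk]
  constructor <;> simp only [mul_left_comm k]

theorem fingS'_le (p : ℝ × ℝ × ℝ) : fingS' p ≤ fingS p :=
  max_le_max le_rfl (by have := abs_nonneg (p.2.2 - 1 / 4); linarith)

theorem fingS'_nonneg (p : ℝ × ℝ × ℝ) : 0 ≤ fingS' p :=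
  le_max_of_le_right (by positivity)

theorem fingS_pos {p : ℝ × ℝ × ℝ} (hp : p ≠ (0, 0, 1 / 4)) : 0 < fingS' p ∧ 0 < fingS p := by
  have h : 0 < fingS' p := by
    by_contra h
    apply hp
    obtain ⟨x, y, z⟩ := p
    simp only [fingS', not_lt, max_le_iff] at h
    obtain ⟨⟨h1, h2⟩, h3⟩ := h
    have e1 : x = 0 := abs_eq_zero.1 (le_antisymm (by linarith) (abs_nonneg _))
    have e2 : y = 0 := abs_eq_zero.1 (le_antisymm (by linarith) (abs_nonneg _))
    have e3 : z - 1 / 4 = 0 := abs_eq_zero.1 (le_antisymm (by linarith) (abs_nonneg _))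
    rw [e1, e2, sub_eq_zero.1 e3]
  exact ⟨h, h.trans_le (fingS'_le p)⟩

theorem homoth_homoth (k l : ℝ) (p : ℝ × ℝ × ℝ) : homoth k (homoth l p) = homoth (k * l) p := by
  unfold homoth
  ext <;> simp only <;> ring

theorem homoth_one (p : ℝ × ℝ × ℝ) : homoth 1 p = p := by
  unfold homoth
  ext <;> simp

theorem homoth_center (k : ℝ) : homoth k (0, 0, 1 / 4) = (0, 0, 1 / 4) := by
  unfold homoth
  ext <;> simp

theorem fingS_fingG (p : ℝ × ℝ × ℝ) : fingS' (fingG p) = fingS p := by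
  by_cases hp : p = (0, 0, 1 / 4)
  · rw [hp, fingG, homoth_center]; norm_num [fingS, fingS']
  · obtain ⟨h1, h2⟩ := fingS_pos hp
    rw [fingG, (fingS_homoth (by positivity) p).2]; field_simp

theorem fingS_fingH (p : ℝ × ℝ × ℝ) : fingS (fingH p) = fingS' p := by
  by_cases hp : p = (0, 0, 1 / 4)
  · rw [hp, fingH, homoth_center]; norm_num [fingS, fingS']
  · obtain ⟨h1, h2⟩ := fingS_pos hp
    rw [fingH, (fingS_homoth (by positivity) p).1]; field_simp

theorem fingH_fingG (p : ℝ × ℝ × ℝ) : fingH (fingG p) = p := by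
  by_cases hp : p = (0, 0, 1 / 4)
  · rw [hp, fingG, homoth_center, fingH, homoth_center]
  · obtain ⟨h1, h2⟩ := fingS_pos hp
    have hk : 0 ≤ fingS p / fingS' p := by positivity
    rw [fingH, fingS_fingG]
    unfold fingG
    rw [(fingS_homoth hk p).1, homoth_homoth]
    convert homoth_one p using 2
    field_simp

theorem fingG_fingH (p : ℝ × ℝ × ℝ) : fingG (fingH p) = p := by
  by_cases hp : p = (0, 0, 1 / 4)
  · rw [hp, fingH, homoth_center, fingG, homoth_center]
  · obtain ⟨h1, h2⟩ := fingS_pos hp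
    have hk : 0 ≤ fingS' p / fingS p := by positivity
    rw [fingG, fingS_fingH]
    unfold fingH
    rw [(fingS_homoth hk p).2, homoth_homoth]
    convert homoth_one p using 2
    field_simp

theorem fing_fixed {p : ℝ × ℝ × ℝ} (h : 1 / 4 ≤ |p.1| ∨ 1 / 4 ≤ |p.2.1|)
    (hz : |p.2.2 - 1 / 4| ≤ 1 / 2) : fingG p = p ∧ fingH p = p := by
  have h0 := abs_nonneg (p.2.2 - 1 / 4)
  have h1 : 1 ≤ max (4 * |p.1|) (4 * |p.2.1|) := by
    rcases h with h | h
    · exact le_max_of_le_left (by linarith)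
    · exact le_max_of_le_right (by linarith)
  have e1 : fingS p = max (4 * |p.1|) (4 * |p.2.1|) := max_eq_left (by linarith)
  have e2 : fingS' p = max (4 * |p.1|) (4 * |p.2.1|) := max_eq_left (by linarith)
  unfold fingG fingH
  rw [e1, e2, div_self (by linarith), homoth_one]
  exact ⟨rfl, rfl⟩

theorem continuous_fingG : Continuous fingG := by
  have hS : Continuous fingS := by unfold fingS; fun_prop
  have hS' : Continuous fingS' := by unfold fingS'; fun_prop
  have hc : Continuous (fun p : ℝ × ℝ × ℝ =>
      fingS p • ((fingS' p)⁻¹ • ((p.1, p.2.1, p.2.2 - 1 / 4) : ℝ × ℝ × ℝ))) := by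
    refine continuous_smul_of_bounded (C := 3 / 2) hS ?_ ?_
    · intro p
      rcases (fingS'_nonneg p).eq_or_lt with h | h
      · rw [← h]; norm_num
      · rw [norm_smul, norm_inv, Real.norm_of_nonneg h.le, inv_mul_le_iff₀ h]
        have a1 : 4 * |p.1| ≤ fingS' p := (le_max_left _ _).trans (le_max_left _ _)
        have a2 : 4 * |p.2.1| ≤ fingS' p := (le_max_right _ _).trans (le_max_left _ _)
        have a3 : 2 / 3 * |p.2.2 - 1 / 4| ≤ fingS' p := le_max_right _ _
        simp only [Prod.norm_def, Real.norm_eq_abs, max_le_iff]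
        refine ⟨?_, ?_, ?_⟩ <;> linarith
    · intro p hp
      have : fingS' p ≠ 0 := by
        by_cases h : p = (0, 0, 1 / 4)
        · exfalso; apply hp; rw [h]; norm_num [fingS]
        · exact (fingS_pos h).1.ne'
      exact (hS'.continuousAt.inv₀ this).smul (by fun_prop)
  have : fingG = fun p => (0, 0, 1 / 4) + fingS p • ((fingS' p)⁻¹ •
      ((p.1, p.2.1, p.2.2 - 1 / 4) : ℝ × ℝ × ℝ)) := by
    funext p
    unfold fingG homoth
    ext <;> simp <;> ring
  rw [this]
  exact continuous_const.add hc

theorem fing_small {p : ℝ × ℝ × ℝ} (hp : p ∈ Klift) : (fingG p = p) ∨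
    (|p.1| < 1 / 4 ∧ |p.2.1| < 1 / 4 ∧ fingS p ≤ 1) := by
  obtain ⟨h1, h2, h3, h4⟩ := hp
  have h5 : |p.2.2 - 1 / 4| ≤ 1 / 2 := by rw [abs_le] at *; constructor <;> linarith
  by_cases h : 1 / 4 ≤ |p.1| ∨ 1 / 4 ≤ |p.2.1|
  · exact Or.inl (fing_fixed h h5).1
  · push Not at h
    refine Or.inr ⟨h.1, h.2, ?_⟩
    unfold fingS
    simp only [max_le_iff]
    refine ⟨⟨?_, ?_⟩, ?_⟩ <;> linarith [h.1, h.2]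

theorem fingS'_le_one {p : ℝ × ℝ × ℝ} : fingS' p ≤ 1 ↔
    |p.1| ≤ 1 / 4 ∧ |p.2.1| ≤ 1 / 4 ∧ |p.2.2 - 1 / 4| ≤ 3 / 2 := by
  unfold fingS'
  simp only [max_le_iff]
  constructor
  · rintro ⟨⟨h1, h2⟩, h3⟩; refine ⟨?_, ?_, ?_⟩ <;> linarith
  · rintro ⟨h1, h2, h3⟩; refine ⟨⟨?_, ?_⟩, ?_⟩ <;> linarith

theorem fingS_le_one {p : ℝ × ℝ × ℝ} : fingS p ≤ 1 ↔
    |p.1| ≤ 1 / 4 ∧ |p.2.1| ≤ 1 / 4 ∧ |p.2.2 - 1 / 4| ≤ 1 / 2 := by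
  unfold fingS
  simp only [max_le_iff]
  constructor
  · rintro ⟨⟨h1, h2⟩, h3⟩; refine ⟨?_, ?_, ?_⟩ <;> linarith
  · rintro ⟨h1, h2, h3⟩; refine ⟨⟨?_, ?_⟩, ?_⟩ <;> linarith

theorem fingG_mem {p : ℝ × ℝ × ℝ} (hp : p ∈ Klift) : fingG p ∈ Vlift := by
  have hp0 := hp
  obtain ⟨h1, h2, h3, h4⟩ := hp
  rcases fing_small hp0 with h | ⟨-, -, h⟩
  · rw [h, Vlift]
    rw [abs_le] at h3
    exact ⟨h1, h2, by linarith, h3.2, Or.inl ⟨h4, by linarith⟩⟩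
  · rw [← fingS_fingG, fingS'_le_one] at h
    have h5 : (fingG p).2.2 ≤ 1 / 4 := by
      show 1 / 4 + fingS p / fingS' p * (p.2.2 - 1 / 4) ≤ 1 / 4
      have : 0 ≤ fingS p / fingS' p :=
        div_nonneg ((fingS'_nonneg p).trans (fingS'_le p)) (fingS'_nonneg p)
      nlinarith [(abs_le.1 h3).2]
    obtain ⟨a, b, c⟩ := h
    rw [abs_le (a := _ - _)] at c
    exact ⟨by linarith, by linarith, by linarith, h5, Or.inr ⟨a, b⟩⟩

theorem fingG_image_Klift : fingG '' Klift = Vlift := by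
  apply Subset.antisymm
  · rintro _ ⟨p, hp, rfl⟩
    exact fingG_mem hp
  · intro p hp
    refine ⟨fingH p, ?_, fingG_fingH p⟩
    obtain ⟨h1, h2, h3, h4, h5⟩ := hp
    by_cases h : (1 / 4 ≤ |p.1| ∨ 1 / 4 ≤ |p.2.1|) ∧ -(1 / 4) ≤ p.2.2
    · rw [(fing_fixed h.1 (by rw [abs_le]; constructor <;> linarith [h.2])).2]
      refine ⟨h1, h2, by rw [abs_le]; constructor <;> linarith [h.2], ?_⟩
      rcases h5 with h5 | h5
      · exact h5.1
      · exact Or.inl h5.1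
    · have h6 : |p.1| ≤ 1 / 4 ∧ |p.2.1| ≤ 1 / 4 := by
        rcases h5 with h5 | h5
        · push Not at h
          by_contra h7
          rw [not_and_or, not_le, not_le] at h7
          have := h (h7.imp le_of_lt le_of_lt)
          linarith [h5.2]
        · exact h5
      have h7 : fingS' p ≤ 1 := fingS'_le_one.2
        ⟨h6.1, h6.2, by rw [abs_le]; constructor <;> linarith⟩
      rw [← fingS_fingH, fingS_le_one] at h7
      obtain ⟨a, b, c⟩ := h7
      have h8 : (fingH p).2.2 ≤ 1 / 4 := by
        show 1 / 4 + fingS' p / fingS p * (p.2.2 - 1 / 4) ≤ 1 / 4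
        have : 0 ≤ fingS' p / fingS p :=
          div_nonneg (fingS'_nonneg p) ((fingS'_nonneg p).trans (fingS'_le p))
        nlinarith
      rw [abs_le (a := _ - _)] at c
      exact ⟨by linarith, by linarith, by rw [abs_le]; constructor <;> linarith, Or.inl a⟩

theorem T2flat_subset : T2flat ⊆ Klift := by
  rintro ⟨x, y, z⟩ ⟨h1, h2, h⟩
  simp only at h1 h2 h
  have h3 : min |x| |y| ≤ 1 / 4 := by
    rcases h with h | h
    · exact h.2
    · exact h.2.2.le
  refine ⟨h1, h2, ?_, min_le_iff.1 h3⟩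
  show |z| ≤ 1 / 4
  rw [abs_le]
  rcases h with ⟨h, -⟩ | ⟨h, h', -⟩ <;> constructor <;> linarith

theorem fingG_image_T2flat : fingG '' T2flat = T2lift := by
  apply Subset.antisymm
  · rintro _ ⟨p, hp, rfl⟩
    have hm := fingG_mem (T2flat_subset hp)
    have hp0 := hp
    obtain ⟨h1, h2, h⟩ := hp
    have h5 : |p.2.2 - 1 / 4| ≤ 1 / 2 := by
      rw [abs_le]
      rcases h with ⟨h, -⟩ | ⟨h, h', -⟩ <;> constructor <;> linarith
    by_cases h6 : 1 / 4 ≤ |p.1| ∨ 1 / 4 ≤ |p.2.1|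
    · rw [(fing_fixed h6 h5).1]
      refine ⟨h1, h2, ?_⟩
      rcases h with h | h
      · exact Or.inr (Or.inl ⟨h.1, h.2, le_max_iff.2 h6⟩)
      · exact Or.inl h
    · push Not at h6
      have h7 : p.2.2 = -(1 / 4) := by
        rcases h with h | h
        · exact h.1
        · have := h.2.2.symm.le.trans (min_le_left _ _); linarith [h6.1]
      have h8 : fingS p = 1 := by
        unfold fingS
        rw [h7]
        norm_num
        constructor <;> linarith [h6.1, h6.2]
      have hk : 1 ≤ fingS p / fingS' p := by
        rw [one_le_div]
        · exact fingS'_le p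
        · apply (fingS_pos _).1
          intro h; rw [h] at h7; norm_num at h7
      have h9 : (fingG p).2.2 ≤ -(1 / 4) := by
        show 1 / 4 + fingS p / fingS' p * (p.2.2 - 1 / 4) ≤ -(1 / 4)
        rw [h7]; linarith
      have h10 := h8
      rw [← fingS_fingG] at h10
      have h11 := fingS'_le_one.1 h10.le
      refine ⟨hm.1, hm.2.1, ?_⟩
      by_cases h12 : (fingG p).2.2 = -(5 / 4)
      · exact Or.inr (Or.inr (Or.inr ⟨h12, max_le h11.1 h11.2.1⟩))
      · refine Or.inr (Or.inr (Or.inl ⟨hm.2.2.1, h9, ?_⟩))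
        have h13 : |(fingG p).2.2 - 1 / 4| < 3 / 2 := by
          rw [abs_lt]
          refine ⟨?_, by linarith⟩
          have := lt_of_le_of_ne hm.2.2.1 (Ne.symm h12)
          linarith
        refine le_antisymm (max_le h11.1 h11.2.1) ?_
        by_contra h14
        rw [not_le, max_lt_iff] at h14
        unfold fingS' at h10
        have : max (max (4 * |(fingG p).1|) (4 * |(fingG p).2.1|))
          (2 / 3 * |(fingG p).2.2 - 1 / 4|) < 1 :=
          max_lt (max_lt (by linarith [h14.1]) (by linarith [h14.2])) (by linarith)
        linarith
  · intro p hp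
    refine ⟨fingH p, ?_, fingG_fingH p⟩
    obtain ⟨h1, h2, h3⟩ := hp
    by_cases h : (1 / 4 ≤ |p.1| ∨ 1 / 4 ≤ |p.2.1|) ∧ -(1 / 4) ≤ p.2.2
    · have hz : p.2.2 ≤ 0 := by
        rcases h3 with ⟨-, h, -⟩ | ⟨h, -⟩ | ⟨-, h, -⟩ | ⟨h, -⟩ <;> linarith
      rw [(fing_fixed h.1 (by rw [abs_le]; constructor <;> linarith [h.2])).2]
      refine ⟨h1, h2, ?_⟩
      rcases h3 with h3 | h3 | h3 | h3
      · exact Or.inr h3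
      · exact Or.inl ⟨h3.1, h3.2.1⟩
      · refine Or.inl ⟨le_antisymm h3.2.1 h.2, (min_le_max).trans h3.2.2.le⟩
      · linarith [h.2, h3.1]
    · have h6 : p.2.2 ≤ -(1 / 4) ∧ -(5 / 4) ≤ p.2.2 ∧ fingS' p = 1 := by
        unfold fingS'
        rw [← mul_max_of_nonneg _ _ (by norm_num : (0 : ℝ) ≤ 4)]
        rcases h3 with h3 | h3 | h3 | h3
        · exact absurd ⟨Or.inl (h3.2.2.symm.le.trans (min_le_left _ _)), h3.1⟩ h
        · exact absurd ⟨le_max_iff.1 h3.2.2, h3.1.symm.le⟩ h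
        · refine ⟨h3.2.1, h3.1, ?_⟩
          rw [h3.2.2, abs_of_nonpos (by linarith [h3.2.1]), max_eq_left] <;> linarith [h3.1]
        · refine ⟨by linarith [h3.1], h3.1.symm.le, ?_⟩
          rw [h3.1, max_eq_right, abs_of_neg] <;> norm_num
          linarith [h3.2]
      obtain ⟨a, b, c⟩ := h6
      obtain ⟨c1, c2, c3⟩ := fingS'_le_one.1 c.le
      have d1 : fingS p = 2 * (1 / 4 - p.2.2) := by
        unfold fingS
        have e : |p.2.2 - 1 / 4| = 1 / 4 - p.2.2 := by rw [abs_of_nonpos] <;> linarith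
        rw [e, max_eq_right]
        apply max_le <;> linarith
      have d2 := fingS_le_one.1 ((fingS_fingH p).le.trans c.le)
      refine ⟨by linarith [d2.1], by linarith [d2.2.1], Or.inl ⟨?_, min_le_of_left_le d2.1⟩⟩
      show 1 / 4 + fingS' p / fingS p * (p.2.2 - 1 / 4) = -(1 / 4)
      rw [c, d1]
      have e : p.2.2 - 1 / 4 = -(1 / 4 - p.2.2) := by ring
      have : 1 / 4 - p.2.2 ≠ 0 := by linarith
      rw [e]
      generalize 1 / 4 - p.2.2 = w at this
      field_simp
      norm_num

theorem finger_ker {p r : ℝ × ℝ × ℝ} (hp : p ∈ Klift) (hr : r ∈ Klift) :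
    qT p = qT r ↔ qT (fingG p) = qT (fingG r) := by
  have key : ∀ {p r : ℝ × ℝ × ℝ}, p ∈ Vlift → r ∈ Vlift → qT p = qT r →
      p = r ∨ ((|p.1| = 1 ∧ |r.1| = 1) ∨ (|p.2.1| = 1 ∧ |r.2.1| = 1)) := by
    rintro ⟨a, b, c⟩ ⟨a', b', c'⟩ ⟨h1, h2, h3, h4, -⟩ ⟨h1', h2', h3', h4', -⟩ h
    rw [qT_eq] at h
    have e3 := circ_eq_of_lt h.2.2 (by linarith) (by linarith)
    rcases (circ_eq_iff_unit h1 h1').1 h.1 with h5 | h5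
    · rcases (circ_eq_iff_unit h2 h2').1 h.2.1 with h6 | h6
      · left; exact Prod.ext h5 (Prod.ext h6 e3)
      · right; right; exact h6
    · right; left; exact h5
  have sub : ∀ {p : ℝ × ℝ × ℝ}, p ∈ Klift → p ∈ Vlift := by
    intro p ⟨h1, h2, h3, h4⟩
    rw [abs_le] at h3
    exact ⟨h1, h2, by linarith, h3.2, Or.inl ⟨h4, by linarith⟩⟩
  have fix : ∀ {p : ℝ × ℝ × ℝ}, p ∈ Klift → (|p.1| = 1 ∨ |p.2.1| = 1 ∨
      |(fingG p).1| = 1 ∨ |(fingG p).2.1| = 1) → fingG p = p := by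
    intro p hp h
    rcases fing_small hp with h' | ⟨h1, h2, h3⟩
    · exact h'
    · rw [← fingS_fingG, fingS'_le_one] at h3
      exfalso
      rcases h with h | h | h | h <;> linarith [h3.1, h3.2.1]
  constructor
  · intro h
    rcases key (sub hp) (sub hr) h with h' | h' | h'
    · rw [h']
    · rw [fix hp (by tauto), fix hr (by tauto), h]
    · rw [fix hp (by tauto), fix hr (by tauto), h]
  · intro h
    rcases key (fingG_mem hp) (fingG_mem hr) h with h' | h' | h'
    · rw [← fingH_fingG p, h', fingH_fingG]
    · rw [fix hp (by tauto), fix hr (by tauto)] at h; exact h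
    · rw [fix hp (by tauto), fix hr (by tauto)] at h; exact h

theorem finger_homeo {s : Set (ℝ × ℝ × ℝ)} (hs : IsCompact s) (hK : s ⊆ Klift) :
    Nonempty ((qT '' s) ≃ₜ (qT '' (fingG '' s))) := by
  rw [← image_comp]
  exact image_homeo_of_ker hs continuous_qT.continuousOn
    (continuous_qT.comp continuous_fingG).continuousOn
    fun a ha b hb => finger_ker (hK ha) (hK hb)

theorem isCompact_Klift : IsCompact Klift := by
  have h : IsClosed Klift := by
    unfold Klift
    simp only [ofPred_or, ofPred_and]
    refine IsClosed.inter ?_ (IsClosed.inter ?_ (IsClosed.inter ?_ (IsClosed.union ?_ ?_))) <;>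
    · refine isClosed_le ?_ ?_ <;> fun_prop
  refine (isCompact_closedBall (0 : ℝ × ℝ × ℝ) 1).of_isClosed_subset h ?_
  rintro ⟨x, y, z⟩ ⟨h1, h2, h3, -⟩
  simp only [mem_closedBall, dist_zero_right, Prod.norm_def, Real.norm_eq_abs, max_le_iff]
  simp only at h1 h2 h3
  exact ⟨h1, h2, by linarith⟩

theorem isClosed_T2flat : IsClosed T2flat := by
  unfold T2flat
  simp only [ofPred_or, ofPred_and]
  refine IsClosed.inter (isClosed_le ?_ ?_) (IsClosed.inter (isClosed_le ?_ ?_)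
    (IsClosed.union (IsClosed.inter (isClosed_eq ?_ ?_) (isClosed_le ?_ ?_))
    (IsClosed.inter (isClosed_le ?_ ?_) (IsClosed.inter (isClosed_le ?_ ?_)
      (isClosed_eq ?_ ?_))))) <;> fun_prop

theorem Vcut_homeo_cross : Nonempty (Vcut ≃ₜ (qT '' Klift)) := by
  obtain ⟨e⟩ := finger_homeo isCompact_Klift subset_rfl
  rw [fingG_image_Klift, ← Vcut_eq] at e
  exact ⟨e.symm⟩

theorem T2_homeo_flat : Nonempty ((qT '' T2lift) ≃ₜ (qT '' T2flat)) := by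
  obtain ⟨e⟩ := finger_homeo (isCompact_Klift.of_isClosed_subset isClosed_T2flat T2flat_subset)
    T2flat_subset
  rw [fingG_image_T2flat] at e
  exact ⟨e.symm⟩

/-! ### Once-punctured tori and products -/

/-- The square annulus, a fundamental domain for the model of the once-punctured torus. -/
def PuncLift : Set (ℝ × ℝ) := {p | 1 / 4 ≤ ‖p‖ ∧ ‖p‖ ≤ 1}

theorem PuncTorusModel_eq : PuncTorusModel = qT2 '' PuncLift := by
  unfold PuncTorusModel
  congr 1
  ext ⟨x, y⟩
  simp only [PuncLift, mem_ofPred_eq, Prod.norm_def, Real.norm_eq_abs, mem_Icc, ← abs_le,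
    le_max_iff, max_le_iff]
  tauto

theorem isCompact_PuncLift : IsCompact PuncLift := by
  have h : IsClosed PuncLift := by
    unfold PuncLift
    simp only [ofPred_and]
    refine IsClosed.inter (isClosed_le ?_ ?_) (isClosed_le ?_ ?_) <;> fun_prop
  refine (isCompact_closedBall (0 : ℝ × ℝ) 1).of_isClosed_subset h ?_
  rintro p ⟨-, h⟩
  simpa using h

/-- Radial reparametrization of the plane by the function `m` of the radius. -/
def cone (m : ℝ → ℝ) (p : ℝ × ℝ) : ℝ × ℝ := (m ‖p‖ / ‖p‖) • p

theorem norm_cone {m : ℝ → ℝ} {p : ℝ × ℝ} (hp : 0 < ‖p‖) (hm : 0 ≤ m ‖p‖) :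
    ‖cone m p‖ = m ‖p‖ := by
  rw [cone, norm_smul, Real.norm_of_nonneg (by positivity)]
  field_simp

theorem exists_cone {m : ℝ → ℝ} {u : ℝ × ℝ} {r : ℝ} (hr : 0 < r) (hu : 0 < ‖u‖)
    (h : m r = ‖u‖) : ∃ p : ℝ × ℝ, ‖p‖ = r ∧ cone m p = u := by
  have h1 : ‖(r / ‖u‖) • u‖ = r := by
    rw [norm_smul, Real.norm_of_nonneg (by positivity)]
    field_simp
  refine ⟨(r / ‖u‖) • u, h1, ?_⟩
  rw [cone, h1, h, smul_smul]
  convert one_smul ℝ u using 2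
  field_simp

theorem continuousOn_cone {m : ℝ → ℝ} (hm : Continuous m) : ContinuousOn (cone m) PuncLift := by
  unfold cone
  refine ContinuousOn.smul (f := fun p : ℝ × ℝ => m ‖p‖ / ‖p‖) (g := fun p => p)
    (ContinuousOn.div ?_ ?_ ?_) continuousOn_id
  · exact (hm.comp continuous_norm).continuousOn
  · exact continuous_norm.continuousOn
  · intro p hp; linarith [hp.1]

theorem qT2_eq {p p' : ℝ × ℝ} : qT2 p = qT2 p' ↔
    (p.1 : AddCircle (2 : ℝ)) = p'.1 ∧ (p.2 : AddCircle (2 : ℝ)) = p'.2 := by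
  simp [qT2, Prod.ext_iff]

theorem qT2_norm {p p' : ℝ × ℝ} (hp : ‖p‖ ≤ 1) (hp' : ‖p'‖ ≤ 1) (h : qT2 p = qT2 p') :
    ‖p‖ = ‖p'‖ := by
  rw [qT2_eq] at h
  simp only [Prod.norm_def, Real.norm_eq_abs, max_le_iff] at *
  rw [circ_abs_eq hp.1 hp'.1 h.1, circ_abs_eq hp.2 hp'.2 h.2]

theorem qT2_inj {p p' : ℝ × ℝ} (hp : ‖p‖ < 1) (hp' : ‖p'‖ < 1) (h : qT2 p = qT2 p') :
    p = p' := by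
  rw [qT2_eq] at h
  simp only [Prod.norm_def, Real.norm_eq_abs, max_lt_iff, abs_lt] at *
  exact Prod.ext (circ_eq_of_lt h.1 (by linarith) (by linarith))
    (circ_eq_of_lt h.2 (by linarith) (by linarith))

/-- A radial reparametrization fixing exactly the boundary of the square
respects the identifications of its sides. -/
theorem cone_ker {m : ℝ → ℝ} (hm : ∀ r, 1 / 4 ≤ r → r ≤ 1 → 0 < m r ∧ m r ≤ 1)
    (hm1 : m 1 = 1) (hm2 : ∀ r, 1 / 4 ≤ r → r < 1 → m r < 1) {p p' : ℝ × ℝ}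
    (hp : p ∈ PuncLift) (hp' : p' ∈ PuncLift) :
    (qT2 (cone m p) = qT2 (cone m p') ∧ ‖p‖ = ‖p'‖) ↔ qT2 p = qT2 p' := by
  have h0 : 0 < ‖p‖ := by linarith [hp.1]
  have h0' : 0 < ‖p'‖ := by linarith [hp'.1]
  have key : ‖p‖ = ‖p'‖ → (qT2 (cone m p) = qT2 (cone m p') ↔ qT2 p = qT2 p') := by
    intro h
    rcases hp'.2.eq_or_lt with h1 | h1
    · unfold cone
      rw [h, h1, hm1]; simp
    · have h2 := hm2 _ hp'.1 h1
      have hm0 := (hm _ hp'.1 hp'.2).1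
      have e1 := norm_cone h0 (by rw [h]; exact hm0.le)
      have e2 := norm_cone h0' hm0.le
      constructor
      · intro h3
        have h4 := qT2_inj (by rw [e1, h]; exact h2) (by rw [e2]; exact h2) h3
        unfold cone at h4
        rw [h] at h4
        rw [smul_right_injective _ (by positivity) h4]
      · intro h3
        rw [qT2_inj (by rw [h]; exact h1) h1 h3]
  constructor
  · rintro ⟨h1, h2⟩
    exact (key h2).1 h1
  · intro h
    have h2 := qT2_norm hp.2 hp'.2 h
    exact ⟨(key h2).2 h, h2⟩

/-- The set of points of height at most `1/4` in absolute value selected by a condition on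
their height and the smaller of the absolute values of the other coordinates. -/
def liftOf (P : ℝ → ℝ → Prop) : Set (ℝ × ℝ × ℝ) :=
  {p | |p.1| ≤ 1 ∧ |p.2.1| ≤ 1 ∧ |p.2.2| ≤ 1 / 4 ∧ P (min |p.1| |p.2.1|) p.2.2}

theorem circ_flip {x : ℝ} (hx : |x| ≤ 1) : ∃ u : ℝ, |u| = 1 - |x| ∧
    ((1 + u : ℝ) : AddCircle (2 : ℝ)) = x := by
  rw [abs_le] at hx
  rcases le_total 0 x with h | h
  · refine ⟨x - 1, ?_, by congr 1; ring⟩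
    rw [abs_of_nonneg h, abs_of_nonpos (by linarith)]; ring
  · refine ⟨x + 1, ?_, ?_⟩
    · rw [abs_of_nonpos h, abs_of_nonneg (by linarith)]; ring
    · rw [← circ_add_two x]; congr 1; ring

/-- The quotient map with the origin of the plane moved to the corner of the square. -/
def qShift (u : ℝ × ℝ) (z : ℝ) : T3 := qT (1 + u.1, 1 + u.2, z)

theorem qShift_eq {u u' : ℝ × ℝ} {z z' : ℝ} (hz : |z| ≤ 1 / 4) (hz' : |z'| ≤ 1 / 4) :
    qShift u z = qShift u' z' ↔ qT2 u = qT2 u' ∧ z = z' := by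
  unfold qShift
  rw [qT_eq, qT2_eq]
  simp only [AddCircle.coe_add, add_right_inj]
  rw [and_assoc]
  refine and_congr_right fun _ => and_congr_right fun _ => ?_
  rw [abs_le] at hz hz'
  exact ⟨fun h => circ_eq_of_lt h (by linarith) (by linarith), fun h => by rw [h]⟩

theorem continuous_qShift : Continuous (fun p : (ℝ × ℝ) × ℝ => qShift p.1 p.2) := by
  unfold qShift
  exact continuous_qT.comp (by fun_prop)

theorem image_liftOf (P : ℝ → ℝ → Prop) {t : T3} : t ∈ qT '' liftOf P ↔
    ∃ (u : ℝ × ℝ) (z : ℝ), ‖u‖ ≤ 1 ∧ |z| ≤ 1 / 4 ∧ P (1 - ‖u‖) z ∧ qShift u z = t := by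
  constructor
  · rintro ⟨⟨x, y, z⟩, ⟨h1, h2, h3, h4⟩, rfl⟩
    simp only at h1 h2 h3 h4
    obtain ⟨u, hu, hu'⟩ := circ_flip h1
    obtain ⟨v, hv, hv'⟩ := circ_flip h2
    have hn : ‖((u, v) : ℝ × ℝ)‖ = 1 - min |x| |y| := by
      rw [Prod.norm_def, Real.norm_eq_abs, Real.norm_eq_abs, hu, hv, max_sub_sub_left]
    refine ⟨(u, v), z, ?_, h3, ?_, ?_⟩
    · rw [hn]; have := le_min (abs_nonneg x) (abs_nonneg y); linarith
    · rwa [hn, sub_sub_cancel]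
    · unfold qShift
      rw [qT_eq]; exact ⟨hu', hv', rfl⟩
  · rintro ⟨⟨u, v⟩, z, h1, h2, h3, rfl⟩
    have h1' := h1
    rw [Prod.norm_def, Real.norm_eq_abs, Real.norm_eq_abs, max_le_iff] at h1'
    obtain ⟨x, hx, hx'⟩ := circ_flip h1'.1
    obtain ⟨y, hy, hy'⟩ := circ_flip h1'.2
    have hn : min |x| |y| = 1 - ‖((u, v) : ℝ × ℝ)‖ := by
      rw [Prod.norm_def, Real.norm_eq_abs, Real.norm_eq_abs, hx, hy, min_sub_sub_left]
    refine ⟨(x, y, z), ⟨?_, ?_, h2, ?_⟩, ?_⟩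
    · simp only; rw [hx]; linarith [abs_nonneg u]
    · simp only; rw [hy]; linarith [abs_nonneg v]
    · simp only; rwa [hn]
    · unfold qShift
      simp only at hx' hy'
      have e : ∀ {a b : ℝ}, ((1 + a : ℝ) : AddCircle (2 : ℝ)) = b →
          (a : AddCircle (2 : ℝ)) = ((1 + b : ℝ) : AddCircle (2 : ℝ)) := by
        intro a b h
        rw [AddCircle.coe_add 2 1 b, ← h, ← AddCircle.coe_add, ← circ_add_two a]
        congr 1; ring
      rw [qT_eq]
      exact ⟨e hx', e hy', rfl⟩

theorem T1lift_eq : T1lift = liftOf fun s z => (z = 1 / 4 ∧ s ≤ 1 / 4) ∨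
    (0 ≤ z ∧ z ≤ 1 / 4 ∧ s = 1 / 4) := by
  ext ⟨x, y, z⟩
  simp only [T1lift, liftOf, mem_ofPred_eq]
  refine and_congr_right fun _ => and_congr_right fun _ => ?_
  refine (and_iff_right_of_imp ?_).symm
  rintro (⟨h, -⟩ | ⟨h1, h2, -⟩) <;> rw [abs_le] <;> constructor <;> linarith

theorem T2flat_eq : T2flat = liftOf fun s z => (z = -(1 / 4) ∧ s ≤ 1 / 4) ∨
    (-(1 / 4) ≤ z ∧ z ≤ 0 ∧ s = 1 / 4) := by
  ext ⟨x, y, z⟩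
  simp only [T2flat, liftOf, mem_ofPred_eq]
  refine and_congr_right fun _ => and_congr_right fun _ => ?_
  refine (and_iff_right_of_imp ?_).symm
  rintro (⟨h, -⟩ | ⟨h1, h2, -⟩) <;> rw [abs_le] <;> constructor <;> linarith

theorem Klift_eq : Klift = liftOf fun s _ => s ≤ 1 / 4 := by
  ext ⟨x, y, z⟩
  simp only [Klift, liftOf, mem_ofPred_eq, min_le_iff]

/-- The radius profile of the parametrization of `T₁` and `T₂`: the collar `1/4 ≤ r ≤ 1/2` of the
puncture is sent to the vertical annulus above or below `∂E`. -/
def prof (r : ℝ) : ℝ := max (3 / 4) ((1 + r) / 2)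

theorem prof_pos (r : ℝ) : 0 < prof r := lt_max_of_lt_left (by norm_num)

theorem punc_homeo {P : ℝ → ℝ → Prop} {e : ℝ} (he : |e| = 1)
    (hP : ∀ s z, |z| ≤ 1 / 4 → 0 ≤ s → (P s z ↔ (e * z = 1 / 4 ∧ s ≤ 1 / 4) ∨
      (0 ≤ e * z ∧ e * z ≤ 1 / 4 ∧ s = 1 / 4))) :
    IsOncePuncturedTorus (qT '' liftOf P) := by
  have hee : e * e = 1 := by rw [← abs_mul_self, abs_mul, he]; norm_num
  have hpc : Continuous prof := by unfold prof; fun_prop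
  let h : ℝ → ℝ := fun r => e * min (r - 1 / 4) (1 / 4)
  have hh : ∀ r, 1 / 4 ≤ r → |h r| ≤ 1 / 4 := by
    intro r hr
    rw [abs_mul, he, one_mul, abs_le]
    exact ⟨by have := le_min (by linarith : 0 ≤ r - 1 / 4) (by norm_num : (0 : ℝ) ≤ 1 / 4); linarith,
      min_le_right _ _⟩
  have hp1 : ∀ r, 1 / 4 ≤ r → r ≤ 1 → 0 < prof r ∧ prof r ≤ 1 := fun r _ h2 =>
    ⟨prof_pos r, max_le (by norm_num) (by linarith)⟩
  have hp2 : prof 1 = 1 := by unfold prof; norm_num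
  have hp3 : ∀ r, 1 / 4 ≤ r → r < 1 → prof r < 1 := fun r _ h2 =>
    max_lt (by norm_num) (by linarith)
  have himg : (fun p => qShift (cone prof p) (h ‖p‖)) '' PuncLift = qT '' liftOf P := by
    ext t
    rw [image_liftOf]
    constructor
    · rintro ⟨p, hp, rfl⟩
      have h0 : 0 < ‖p‖ := by linarith [hp.1]
      have hn := norm_cone h0 (prof_pos ‖p‖).le
      refine ⟨cone prof p, h ‖p‖, ?_, hh _ hp.1, ?_, rfl⟩
      · rw [hn]; exact (hp1 _ hp.1 hp.2).2
      · rw [hP _ _ (hh _ hp.1) (by rw [hn]; linarith [(hp1 _ hp.1 hp.2).2]), hn]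
        simp only [h]
        rw [← mul_assoc, hee, one_mul]
        unfold prof
        rcases le_total ‖p‖ (1 / 2) with h3 | h3
        · right
          rw [min_eq_left (by linarith), max_eq_left (by linarith)]
          refine ⟨?_, ?_, ?_⟩ <;> linarith [hp.1]
        · left
          rw [min_eq_right (by linarith), max_eq_right (by linarith)]
          exact ⟨rfl, by linarith⟩
    · rintro ⟨u, z, h1, h2, h3, rfl⟩
      rw [hP _ _ h2 (by linarith)] at h3
      have : ∃ r, 1 / 4 ≤ r ∧ r ≤ 1 ∧ prof r = ‖u‖ ∧ min (r - 1 / 4) (1 / 4) = e * z := by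
        unfold prof
        rcases h3 with ⟨h3, h4⟩ | ⟨h3, h4, h5⟩
        · refine ⟨2 * ‖u‖ - 1, by linarith, by linarith, ?_, ?_⟩
          · rw [max_eq_right] <;> linarith
          · rw [min_eq_right] <;> linarith
        · refine ⟨1 / 4 + e * z, by linarith, by linarith, ?_, ?_⟩
          · rw [max_eq_left] <;> linarith
          · rw [min_eq_left] <;> linarith
      obtain ⟨r, hr1, hr2, hr3, hr4⟩ := this
      obtain ⟨p, hp, hp'⟩ := exists_cone (by linarith) (by rw [← hr3]; exact prof_pos r) hr3
      refine ⟨p, ⟨by rw [hp]; exact hr1, by rw [hp]; exact hr2⟩, ?_⟩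
      simp only [h]
      rw [hp', hp, hr4, ← mul_assoc, hee, one_mul]
  unfold IsOncePuncturedTorus
  rw [← himg, PuncTorusModel_eq]
  refine image_homeo_of_ker isCompact_PuncLift ?_ continuous_qT2.continuousOn ?_
  · refine continuous_qShift.comp_continuousOn ((continuousOn_cone hpc).prodMk ?_)
    exact Continuous.continuousOn (by fun_prop)
  · intro p hp p' hp'
    rw [qShift_eq (hh _ hp.1) (hh _ hp'.1), ← cone_ker hp1 hp2 hp3 hp hp']
    refine and_congr_right fun h1 => ?_
    have h0 : 0 < ‖p‖ := by linarith [hp.1]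
    have h0' : 0 < ‖p'‖ := by linarith [hp'.1]
    have hn := norm_cone h0 (prof_pos ‖p‖).le
    have hn' := norm_cone h0' (prof_pos ‖p'‖).le
    have h2 := qT2_norm (hn.le.trans (hp1 _ hp.1 hp.2).2) (hn'.le.trans (hp1 _ hp'.1 hp'.2).2) h1
    rw [hn, hn'] at h2
    constructor
    · intro h3
      simp only [h] at h3
      have h4 := mul_left_cancel₀ (by intro h; rw [h] at he; norm_num at he) h3
      unfold prof at h2
      rcases le_total ‖p‖ (1 / 2) with a | a <;> rcases le_total ‖p'‖ (1 / 2) with b | b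
      · rw [min_eq_left (by linarith), min_eq_left (by linarith)] at h4; linarith
      · rw [min_eq_left (by linarith), min_eq_right (by linarith)] at h4
        rw [max_eq_left (by linarith), max_eq_right (by linarith)] at h2; linarith
      · rw [min_eq_right (by linarith), min_eq_left (by linarith)] at h4
        rw [max_eq_right (by linarith), max_eq_left (by linarith)] at h2; linarith
      · rw [max_eq_right (by linarith), max_eq_right (by linarith)] at h2; linarith
    · intro h3; rw [h3]

theorem T1_punc : IsOncePuncturedTorus (qT '' T1lift) := by
  rw [T1lift_eq]
  refine punc_homeo (e := 1) (by norm_num) fun s z _ _ => ?_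
  rw [one_mul]

theorem T2_punc : IsOncePuncturedTorus (qT '' T2lift) := by
  obtain ⟨e⟩ := T2_homeo_flat
  have : IsOncePuncturedTorus (qT '' T2flat) := by
    rw [T2flat_eq]
    refine punc_homeo (e := -1) (by norm_num) fun s z _ _ => ?_
    have h1 : -1 * z = 1 / 4 ↔ z = -(1 / 4) := by constructor <;> intro h <;> linarith
    have h2 : 0 ≤ -1 * z ↔ z ≤ 0 := by constructor <;> intro h <;> linarith
    have h3 : -1 * z ≤ 1 / 4 ↔ -(1 / 4) ≤ z := by constructor <;> intro h <;> linarith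
    rw [h1, h2, h3]
    tauto
  obtain ⟨e'⟩ := this
  exact ⟨e.trans e'⟩

theorem cross_homeo_prod : Nonempty ((qT '' Klift) ≃ₜ PuncTorusModel × Icc (0 : ℝ) 1) := by
  let m : ℝ → ℝ := fun r => 2 / 3 + r / 3
  have hm : Continuous m := by fun_prop
  have hp1 : ∀ r, 1 / 4 ≤ r → r ≤ 1 → 0 < m r ∧ m r ≤ 1 := fun r h1 h2 =>
    ⟨by simp only [m]; linarith, by simp only [m]; linarith⟩
  have hp2 : m 1 = 1 := by norm_num [m]
  have hp3 : ∀ r, 1 / 4 ≤ r → r < 1 → m r < 1 := fun r _ h2 => by simp only [m]; linarith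
  have hz : ∀ t : ℝ, t ∈ Icc (0 : ℝ) 1 → |t / 2 - 1 / 4| ≤ 1 / 4 := by
    rintro t ⟨h1, h2⟩; rw [abs_le]; constructor <;> linarith
  have hm4 : m (1 / 4) = 3 / 4 := by norm_num [m]
  have himg : (fun a : (ℝ × ℝ) × ℝ => qShift (cone m a.1) (a.2 / 2 - 1 / 4)) ''
      (PuncLift ×ˢ Icc 0 1) = qT '' Klift := by
    ext t
    rw [Klift_eq, image_liftOf]
    constructor
    · rintro ⟨⟨p, τ⟩, ⟨hp, hτ⟩, rfl⟩
      simp only at hp hτ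
      have h0 : 0 < ‖p‖ := by linarith [hp.1]
      have hn := norm_cone h0 (hp1 _ hp.1 hp.2).1.le
      refine ⟨cone m p, τ / 2 - 1 / 4, ?_, hz _ hτ, ?_, rfl⟩
      · rw [hn]; exact (hp1 _ hp.1 hp.2).2
      · rw [hn]; simp only [m]; linarith [hp.1]
    · rintro ⟨u, z, h1, h2, h3, rfl⟩
      rw [abs_le] at h2
      obtain ⟨p, hp, hp'⟩ := exists_cone (m := m) (u := u) (r := 3 * ‖u‖ - 2) (by linarith)
        (by linarith) (by simp only [m]; ring)
      refine ⟨(p, 2 * z + 1 / 2), ⟨⟨?_, ?_⟩, ?_, ?_⟩, ?_⟩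
      · simp only [hp]; linarith
      · simp only [hp]; linarith
      · simp only; linarith
      · simp only; linarith
      · simp only [hp']; congr 1; ring
  have himg2 : (fun a : (ℝ × ℝ) × ℝ => (qT2 a.1, a.2)) '' (PuncLift ×ˢ Icc 0 1) =
      PuncTorusModel ×ˢ Icc (0 : ℝ) 1 := by
    rw [PuncTorusModel_eq]
    ext ⟨t, τ⟩
    constructor
    · rintro ⟨⟨p, τ⟩, ⟨hp, hτ⟩, h⟩
      simp only [Prod.mk.injEq] at h
      obtain ⟨rfl, rfl⟩ := h
      exact ⟨⟨p, hp, rfl⟩, hτ⟩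
    · rintro ⟨⟨p, hp, rfl⟩, hτ⟩
      exact ⟨(p, τ), ⟨hp, hτ⟩, rfl⟩
  have : Nonempty ((qT '' Klift) ≃ₜ (PuncTorusModel ×ˢ Icc (0 : ℝ) 1 : Set _)) := by
    rw [← himg, ← himg2]
    refine image_homeo_of_ker (isCompact_PuncLift.prod isCompact_Icc) ?_ ?_ ?_
    · refine continuous_qShift.comp_continuousOn (ContinuousOn.prodMk ?_ ?_)
      · exact (continuousOn_cone hm).comp continuousOn_fst fun a ha => ha.1
      · fun_prop
    · exact ((continuous_qT2.comp continuous_fst).prodMk continuous_snd).continuousOn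
    · rintro ⟨p, τ⟩ ⟨hp, hτ⟩ ⟨p', τ'⟩ ⟨hp', hτ'⟩
      simp only at hp hp' hτ hτ' ⊢
      rw [qShift_eq (hz _ hτ) (hz _ hτ'), Prod.mk.injEq (qT2 p), ← cone_ker hp1 hp2 hp3 hp hp']
      have h0 : 0 < ‖p‖ := by linarith [hp.1]
      have h0' : 0 < ‖p'‖ := by linarith [hp'.1]
      have hn := norm_cone h0 (hp1 _ hp.1 hp.2).1.le
      have hn' := norm_cone h0' (hp1 _ hp'.1 hp'.2).1.le
      constructor
      · rintro ⟨h1, h2⟩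
        have h3 := qT2_norm (hn.le.trans (hp1 _ hp.1 hp.2).2)
          (hn'.le.trans (hp1 _ hp'.1 hp'.2).2) h1
        rw [hn, hn'] at h3
        simp only [m] at h3
        exact ⟨⟨h1, by linarith⟩, by linarith⟩
      · rintro ⟨⟨h1, -⟩, h2⟩
        exact ⟨h1, by rw [h2]⟩
  obtain ⟨e⟩ := this
  exact ⟨e.trans (Homeomorph.Set.prod _ _)⟩

theorem Vcut_homeo_prod : Nonempty (Vcut ≃ₜ (qT '' T1lift) × Icc (0 : ℝ) 1) := by
  obtain ⟨e⟩ := Vcut_homeo_cross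
  obtain ⟨e'⟩ := cross_homeo_prod
  obtain ⟨e''⟩ := T1_punc
  exact ⟨(e.trans e').trans (e''.symm.prodCongr (Homeomorph.refl _))⟩

/-! ### Rotations of the square -/

/-- Complex multiplication on `ℝ × ℝ`. -/
def mulC (c p : ℝ × ℝ) : ℝ × ℝ := (c.1 * p.1 - c.2 * p.2, c.1 * p.2 + c.2 * p.1)

/-- The rotation of the plane by the argument of `c`, rescaled radially so that it preserves the
sup norm. It turns the square cross-section of a solid bar. -/
def sqRot (c p : ℝ × ℝ) : ℝ × ℝ := (‖p‖ / ‖mulC c p‖) • mulC c p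

theorem mulC_ne {c p : ℝ × ℝ} (hc : c ≠ 0) (hp : p ≠ 0) : mulC c p ≠ 0 := by
  obtain ⟨a, b⟩ := c
  obtain ⟨v, w⟩ := p
  intro h
  simp only [mulC, Prod.mk_eq_zero] at h
  simp only [ne_eq, Prod.mk_eq_zero] at hc hp
  have h1 : (a ^ 2 + b ^ 2) * (v ^ 2 + w ^ 2) = 0 := by
    have : (a ^ 2 + b ^ 2) * (v ^ 2 + w ^ 2) = (a * v - b * w) ^ 2 + (a * w + b * v) ^ 2 := by ring
    rw [this, h.1, h.2]; ring
  rcases mul_eq_zero.1 h1 with h2 | h2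
  · exact hc ⟨by nlinarith [sq_nonneg a, sq_nonneg b], by nlinarith [sq_nonneg a, sq_nonneg b]⟩
  · exact hp ⟨by nlinarith [sq_nonneg v, sq_nonneg w], by nlinarith [sq_nonneg v, sq_nonneg w]⟩

theorem mulC_smul (c p : ℝ × ℝ) (k : ℝ) : mulC c (k • p) = k • mulC c p := by
  unfold mulC
  ext <;> simp <;> ring

theorem norm_sqRot {c : ℝ × ℝ} (hc : c ≠ 0) (p : ℝ × ℝ) : ‖sqRot c p‖ = ‖p‖ := by
  by_cases hp : p = 0
  · rw [hp]; simp [sqRot]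
  · have := norm_pos_iff.2 (mulC_ne hc hp)
    rw [sqRot, norm_smul, Real.norm_of_nonneg (by positivity)]
    field_simp

theorem sqRot_conj {c : ℝ × ℝ} (hc : c ≠ 0) (p : ℝ × ℝ) :
    sqRot (c.1, -c.2) (sqRot c p) = p := by
  by_cases hp : p = 0
  · rw [hp]; simp [sqRot]
  · have h1 := norm_pos_iff.2 (mulC_ne hc hp)
    have h0 := norm_pos_iff.2 hp
    have h2 : mulC (c.1, -c.2) (mulC c p) = (c.1 ^ 2 + c.2 ^ 2) • p := by
      unfold mulC
      ext <;> simp <;> ring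
    have h3 : 0 < c.1 ^ 2 + c.2 ^ 2 := by
      by_contra h
      apply hc
      ext
      · show c.1 = 0
        nlinarith [sq_nonneg c.1, sq_nonneg c.2]
      · show c.2 = 0
        nlinarith [sq_nonneg c.1, sq_nonneg c.2]
    rw [sqRot, norm_sqRot hc]
    unfold sqRot
    have h4 : 0 < ‖p‖ / ‖mulC c p‖ * (c.1 ^ 2 + c.2 ^ 2) := by positivity
    rw [mulC_smul, h2, smul_smul (‖p‖ / ‖mulC c p‖), norm_smul, Real.norm_of_nonneg h4.le,
      smul_smul]
    generalize ‖p‖ / ‖mulC c p‖ * (c.1 ^ 2 + c.2 ^ 2) = k at h4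
    convert one_smul ℝ p using 2
    field_simp

theorem sqRot_inj {c : ℝ × ℝ} (hc : c ≠ 0) {p p' : ℝ × ℝ} (h : sqRot c p = sqRot c p') :
    p = p' := by
  rw [← sqRot_conj hc p, h, sqRot_conj hc]

theorem sqRot_surj {c : ℝ × ℝ} (hc : c ≠ 0) (q : ℝ × ℝ) :
    ∃ p : ℝ × ℝ, ‖p‖ = ‖q‖ ∧ sqRot c p = q := by
  have hc' : ((c.1, -c.2) : ℝ × ℝ) ≠ 0 := by
    intro h
    apply hc
    rw [Prod.mk_eq_zero] at h
    exact Prod.ext h.1 (neg_eq_zero.1 h.2)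
  refine ⟨sqRot (c.1, -c.2) q, norm_sqRot hc' q, ?_⟩
  have := sqRot_conj hc' q
  simpa using this

theorem sqRot_pos {a : ℝ} (ha : 0 < a) (p : ℝ × ℝ) : sqRot (a, 0) p = p := by
  have h : mulC (a, 0) p = a • p := by unfold mulC; ext <;> simp
  by_cases hp : p = 0
  · rw [hp]; simp [sqRot]
  have h0 := norm_pos_iff.2 hp
  rw [sqRot, h, norm_smul, Real.norm_of_nonneg ha.le, smul_smul]
  convert one_smul ℝ p using 2
  field_simp

theorem sqRot_neg {a : ℝ} (ha : a < 0) (p : ℝ × ℝ) : sqRot (a, 0) p = -p := by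
  have h : mulC (a, 0) p = a • p := by unfold mulC; ext <;> simp
  by_cases hp : p = 0
  · rw [hp]; simp [sqRot]
  have h0 := norm_pos_iff.2 hp
  rw [sqRot, h, norm_smul, Real.norm_of_nonpos ha.le, smul_smul]
  convert neg_one_smul ℝ p using 2
  have := ha.ne
  field_simp

theorem continuous_sqRot {A : Type*} [TopologicalSpace A] {c p : A → ℝ × ℝ} (hc : Continuous c)
    (hp : Continuous p) (h : ∀ a, c a ≠ 0) : Continuous fun a => sqRot (c a) (p a) := by
  have hm : Continuous fun a => mulC (c a) (p a) := by unfold mulC; fun_prop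
  have : (fun a => sqRot (c a) (p a)) =
      fun a => ‖p a‖ • (‖mulC (c a) (p a)‖⁻¹ • mulC (c a) (p a)) := by
    funext a; rw [sqRot, smul_smul, div_eq_mul_inv]
  rw [this]
  refine continuous_smul_of_bounded (C := 1) hp.norm ?_ ?_
  · intro a
    rw [norm_smul, norm_inv, norm_norm]
    exact inv_mul_le_one_of_le₀ le_rfl (norm_nonneg _)
  · intro a ha
    have h1 : ‖mulC (c a) (p a)‖ ≠ 0 := norm_ne_zero_iff.2 (mulC_ne (h a) (norm_ne_zero_iff.1 ha))
    exact (hm.norm.continuousAt.inv₀ h1).smul hm.continuousAt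

/-! ### The thickened cross as a band with a handle, untwisted -/

/-- The square cross-section of the bars. -/
def Sq : Set (ℝ × ℝ) := closedBall 0 (1 / 4)

theorem mem_Sq {p : ℝ × ℝ} : p ∈ Sq ↔ |p.1| ≤ 1 / 4 ∧ |p.2| ≤ 1 / 4 := by
  simp only [Sq, mem_closedBall, dist_zero_right, Prod.norm_def, Real.norm_eq_abs, max_le_iff]

theorem sqRot_mem {c p : ℝ × ℝ} (hc : c ≠ 0) (hp : p ∈ Sq) : sqRot c p ∈ Sq := by
  simp only [Sq, mem_closedBall, dist_zero_right] at *
  rwa [norm_sqRot hc]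

theorem sqRot_surjSq {c : ℝ × ℝ} (hc : c ≠ 0) {q : ℝ × ℝ} (hq : q ∈ Sq) :
    ∃ p ∈ Sq, sqRot c p = q := by
  obtain ⟨p, h1, h2⟩ := sqRot_surj hc q
  refine ⟨p, ?_, h2⟩
  simp only [Sq, mem_closedBall, dist_zero_right] at *
  rwa [h1]

/-- The rotation of the cross-section along the band: trivial for `1/4 ≤ u ≤ 3/4`, a half turn
for `-3/4 ≤ u ≤ -1/4`, and equal at both ends. -/
def bandC (u : ℝ) : ℝ × ℝ := (u * (1 - u ^ 2), max 0 (|(|u| - 1 / 2)| - 1 / 4))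

/-- The rotation of the cross-section along the handle: a half turn from one end to the other. -/
def armC (t : ℝ) : ℝ × ℝ := (1 - 2 * t, t * (1 - t))

theorem bandC_ne (u : ℝ) : bandC u ≠ 0 := by
  intro h
  simp only [bandC, Prod.mk_eq_zero] at h
  obtain ⟨h1, h2⟩ := h
  have h3 : |(|u| - 1 / 2)| - 1 / 4 ≤ 0 := h2 ▸ le_max_right _ _
  have h4 := abs_le.1 (by linarith : |(|u| - 1 / 2)| ≤ 1 / 4)
  rcases mul_eq_zero.1 h1 with h5 | h5
  · rw [h5, abs_zero] at h4; linarith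
  · have h6 : |u| ^ 2 = 1 := by rw [sq_abs]; linarith
    nlinarith

theorem armC_ne (t : ℝ) : armC t ≠ 0 := by
  intro h
  simp only [armC, Prod.mk_eq_zero] at h
  have : t = 1 / 2 := by linarith [h.1]
  rw [this] at h
  norm_num at h

theorem bandC_end : bandC (-1) = bandC 1 := by unfold bandC; norm_num

theorem bandC_pos {u : ℝ} (h1 : 1 / 4 ≤ u) (h2 : u ≤ 3 / 4) (p : ℝ × ℝ) :
    sqRot (bandC u) p = p := by
  have : bandC u = (u * (1 - u ^ 2), 0) := by
    unfold bandC
    rw [abs_of_nonneg (by linarith : 0 ≤ u), max_eq_left]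
    have : |u - 1 / 2| ≤ 1 / 4 := by rw [abs_le]; constructor <;> linarith
    linarith
  rw [this]
  exact sqRot_pos (mul_pos (by linarith) (by nlinarith)) p

theorem bandC_neg {u : ℝ} (h1 : u ≤ -(1 / 4)) (h2 : -(3 / 4) ≤ u) (p : ℝ × ℝ) :
    sqRot (bandC u) p = -p := by
  have : bandC u = (u * (1 - u ^ 2), 0) := by
    unfold bandC
    rw [abs_of_nonpos (by linarith : u ≤ 0), max_eq_left]
    have : |-u - 1 / 2| ≤ 1 / 4 := by rw [abs_le]; constructor <;> linarith
    linarith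
  rw [this]
  exact sqRot_neg (mul_neg_of_neg_of_pos (by linarith) (by nlinarith)) p

theorem armC_zero (p : ℝ × ℝ) : sqRot (armC 0) p = p := by
  have : armC 0 = (1, 0) := by norm_num [armC]
  rw [this]; exact sqRot_pos one_pos p

theorem armC_one (p : ℝ × ℝ) : sqRot (armC 1) p = -p := by
  have : armC 1 = (-1, 0) := by norm_num [armC]
  rw [this]; exact sqRot_neg (by norm_num) p

/-- Parametrization of the solid band `|y| ≤ 1/4`. The shear `u = x + 2 y` moves the two attaching
regions of the handle, at `y = 1/4` and `y = -1/4`, to disjoint ranges of `u`, and the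
rotation brings both of them to the side `v = 1/4`. -/
def bandMap (a : ℝ × ℝ × ℝ) : T3 :=
  qT (a.1 - 2 * (sqRot (bandC a.1) a.2).1, (sqRot (bandC a.1) a.2).1, (sqRot (bandC a.1) a.2).2)

/-- Parametrization of the solid handle `|x| ≤ 1/4`, `1/4 ≤ y ≤ 7/4`. -/
def armMap (a : ℝ × ℝ × ℝ) : T3 :=
  qT ((sqRot (armC a.1) a.2).1, 1 / 4 + 3 / 2 * a.1, (sqRot (armC a.1) a.2).2)

/-- The parameter space of `bandMap`. -/
def bandDom : Set (ℝ × ℝ × ℝ) := Icc (-1) 1 ×ˢ Sq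

/-- The parameter space of `armMap`. -/
def armDom : Set (ℝ × ℝ × ℝ) := Icc 0 1 ×ˢ Sq

theorem isCompact_bandDom : IsCompact bandDom := isCompact_Icc.prod (isCompact_closedBall _ _)

theorem isCompact_armDom : IsCompact armDom := isCompact_Icc.prod (isCompact_closedBall _ _)

theorem continuous_bandMap : Continuous bandMap := by
  have : Continuous fun a : ℝ × ℝ × ℝ => sqRot (bandC a.1) a.2 :=
    continuous_sqRot (by unfold bandC; fun_prop) continuous_snd fun a => bandC_ne _
  unfold bandMap
  refine continuous_qT.comp ?_
  exact (continuous_fst.sub (continuous_const.mul this.fst)).prodMk (this.fst.prodMk this.snd)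

theorem continuous_armMap : Continuous armMap := by
  have : Continuous fun a : ℝ × ℝ × ℝ => sqRot (armC a.1) a.2 :=
    continuous_sqRot (by unfold armC; fun_prop) continuous_snd fun a => armC_ne _
  unfold armMap
  refine continuous_qT.comp ?_
  exact this.fst.prodMk ((continuous_const.add (continuous_const.mul continuous_fst)).prodMk
    this.snd)

theorem bandMap_ker {u u' : ℝ} {p p' : ℝ × ℝ} (ha : (u, p) ∈ bandDom) (hb : (u', p') ∈ bandDom) :
    bandMap (u, p) = bandMap (u', p') ↔ p = p' ∧ (u = u' ∨ (|u| = 1 ∧ |u'| = 1)) := by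
  obtain ⟨⟨hu1, hu2⟩, hp⟩ := ha
  obtain ⟨⟨hu1', hu2'⟩, hp'⟩ := hb
  simp only at hu1 hu2 hu1' hu2' hp hp'
  have hR := mem_Sq.1 (sqRot_mem (bandC_ne u) hp)
  have hR' := mem_Sq.1 (sqRot_mem (bandC_ne u') hp')
  rw [abs_le, abs_le] at hR hR'
  have hC : (u = u' ∨ (|u| = 1 ∧ |u'| = 1)) → bandC u = bandC u' := by
    have : ∀ u : ℝ, |u| = 1 → bandC u = bandC 1 := by
      intro u h
      rcases abs_eq (by norm_num : (0 : ℝ) ≤ 1) |>.1 h with h | h <;> rw [h]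
      exact bandC_end
    rintro (h | ⟨h, h'⟩)
    · rw [h]
    · rw [this _ h, this _ h']
  unfold bandMap
  rw [qT_eq]
  simp only
  rw [← circ_eq_iff_unit (abs_le.2 ⟨hu1, hu2⟩) (abs_le.2 ⟨hu1', hu2'⟩)] at hC ⊢
  constructor
  · rintro ⟨h1, h2, h3⟩
    have e2 := circ_eq_of_lt h2 (by linarith) (by linarith)
    have e3 := circ_eq_of_lt h3 (by linarith) (by linarith)
    rw [e2, AddCircle.coe_sub, AddCircle.coe_sub, sub_left_inj] at h1
    refine ⟨?_, h1⟩
    have e : sqRot (bandC u) p = sqRot (bandC u') p' := Prod.ext e2 e3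
    rw [hC h1] at e
    exact sqRot_inj (bandC_ne _) e
  · rintro ⟨rfl, h⟩
    rw [hC h]
    refine ⟨?_, rfl, rfl⟩
    rw [AddCircle.coe_sub, AddCircle.coe_sub, h]

theorem armMap_ker {t t' : ℝ} {p p' : ℝ × ℝ} (ha : (t, p) ∈ armDom) (hb : (t', p') ∈ armDom) :
    armMap (t, p) = armMap (t', p') ↔ p = p' ∧ t = t' := by
  obtain ⟨⟨hu1, hu2⟩, hp⟩ := ha
  obtain ⟨⟨hu1', hu2'⟩, hp'⟩ := hb
  simp only at hu1 hu2 hu1' hu2' hp hp'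
  have hR := mem_Sq.1 (sqRot_mem (armC_ne t) hp)
  have hR' := mem_Sq.1 (sqRot_mem (armC_ne t') hp')
  rw [abs_le, abs_le] at hR hR'
  constructor
  · unfold armMap
    rw [qT_eq]
    simp only
    rintro ⟨h1, h2, h3⟩
    have e1 := circ_eq_of_lt h1 (by linarith) (by linarith)
    have e2 := circ_eq_of_lt h2 (by linarith) (by linarith)
    have e3 := circ_eq_of_lt h3 (by linarith) (by linarith)
    have e4 : t = t' := by linarith
    have e : sqRot (armC t) p = sqRot (armC t') p' := Prod.ext e1 e3
    rw [e4] at e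
    exact ⟨sqRot_inj (armC_ne _) e, e4⟩
  · rintro ⟨rfl, rfl⟩; rfl

theorem bandMap_armMap_ker {u t : ℝ} {p p' : ℝ × ℝ} (ha : (u, p) ∈ bandDom)
    (hb : (t, p') ∈ armDom) : bandMap (u, p) = armMap (t, p') ↔
      p.1 = 1 / 4 ∧ p.2 = p'.2 ∧ ((t = 0 ∧ u = 1 / 2 + p'.1) ∨ (t = 1 ∧ u = -(1 / 2) - p'.1)) := by
  obtain ⟨⟨hu1, hu2⟩, hp⟩ := ha
  obtain ⟨⟨ht1, ht2⟩, hp'⟩ := hb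
  simp only at hu1 hu2 ht1 ht2 hp hp'
  have hR := mem_Sq.1 (sqRot_mem (bandC_ne u) hp)
  have hR' := mem_Sq.1 (sqRot_mem (armC_ne t) hp')
  have hp1 := mem_Sq.1 hp'
  rw [abs_le, abs_le] at hR hR' hp1
  unfold bandMap armMap
  rw [qT_eq]
  simp only
  constructor
  · rintro ⟨h1, h2, h3⟩
    have e3 := circ_eq_of_lt h3 (by linarith) (by linarith)
    by_cases h4 : 1 / 4 + 3 / 2 * t - (sqRot (bandC u) p).1 < 2
    · have e2 := circ_eq_of_lt h2 (by linarith) h4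
      have e4 : t = 0 := by linarith
      subst e4
      rw [armC_zero] at *
      have e5 : (sqRot (bandC u) p).1 = 1 / 4 := by linarith
      rw [e5] at h1
      have e1 := circ_eq_of_lt h1 (by linarith) (by linarith)
      rw [bandC_pos (by linarith) (by linarith)] at e5 e3
      exact ⟨e5, e3, Or.inl ⟨by trivial, by linarith⟩⟩
    · have e4 : t = 1 := by linarith
      subst e4
      rw [armC_one] at *
      simp only [Prod.fst_neg, Prod.snd_neg] at *
      have e5 : (sqRot (bandC u) p).1 = -(1 / 4) := by linarith
      rw [e5] at h1
      have e1 := circ_eq_of_lt h1 (by linarith) (by linarith)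
      rw [bandC_neg (by linarith) (by linarith)] at e5 e3
      simp only [Prod.fst_neg, Prod.snd_neg] at e5 e3
      exact ⟨by linarith, by linarith, Or.inr ⟨by trivial, by linarith⟩⟩
  · rintro ⟨h1, h2, ⟨rfl, rfl⟩ | ⟨rfl, rfl⟩⟩
    · rw [armC_zero, bandC_pos (by linarith) (by linarith), h1, h2]
      refine ⟨?_, ?_, rfl⟩ <;> congr 1 <;> ring
    · rw [armC_one, bandC_neg (by linarith) (by linarith)]
      simp only [Prod.fst_neg, Prod.snd_neg]
      rw [h1, h2]
      refine ⟨?_, ?_, rfl⟩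
      · congr 1; ring
      · rw [← circ_add_two]; congr 1; ring

theorem image_band_arm : bandMap '' bandDom ∪ armMap '' armDom = qT '' Klift := by
  apply Subset.antisymm
  · rintro _ (⟨⟨u, p⟩, ⟨hu, hp⟩, rfl⟩ | ⟨⟨t, p⟩, ⟨ht, hp⟩, rfl⟩)
    · have hR := mem_Sq.1 (sqRot_mem (bandC_ne u) hp)
      unfold bandMap
      simp only
      obtain ⟨x, hx, hx'⟩ := circ_lift_unit
        ((u - 2 * (sqRot (bandC u) p).1 : ℝ) : AddCircle (2 : ℝ))
      refine ⟨(x, (sqRot (bandC u) p).1, (sqRot (bandC u) p).2), ⟨hx, ?_, hR.2, Or.inr hR.1⟩, ?_⟩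
      · simp only; linarith [hR.1]
      · rw [qT_eq]; exact ⟨hx', rfl, rfl⟩
    · have hR := mem_Sq.1 (sqRot_mem (armC_ne t) hp)
      unfold armMap
      simp only
      obtain ⟨y, hy, hy'⟩ := circ_lift_unit ((1 / 4 + 3 / 2 * t : ℝ) : AddCircle (2 : ℝ))
      refine ⟨((sqRot (armC t) p).1, y, (sqRot (armC t) p).2), ⟨?_, hy, hR.2, Or.inl hR.1⟩, ?_⟩
      · simp only; linarith [hR.1]
      · rw [qT_eq]; exact ⟨rfl, hy', rfl⟩
  · rintro _ ⟨⟨x, y, z⟩, ⟨hx, hy, hz, h⟩, rfl⟩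
    simp only at hx hy hz h
    by_cases h1 : |y| ≤ 1 / 4
    · left
      obtain ⟨u, hu, hu'⟩ := circ_lift_unit ((x + 2 * y : ℝ) : AddCircle (2 : ℝ))
      obtain ⟨p, hp, hp'⟩ := sqRot_surjSq (bandC_ne u) (q := (y, z)) (mem_Sq.2 ⟨h1, hz⟩)
      refine ⟨(u, p), ⟨abs_le.1 hu, hp⟩, ?_⟩
      unfold bandMap
      simp only [hp']
      rw [qT_eq]
      refine ⟨?_, rfl, rfl⟩
      rw [AddCircle.coe_sub, hu', ← AddCircle.coe_sub]
      congr 1; ring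
    · right
      have h2 : |x| ≤ 1 / 4 := by tauto
      have : ∃ t : ℝ, 0 ≤ t ∧ t ≤ 1 ∧
          ((1 / 4 + 3 / 2 * t : ℝ) : AddCircle (2 : ℝ)) = y := by
        rw [abs_le] at hy
        rw [not_le, lt_abs] at h1
        rcases h1 with h1 | h1
        · exact ⟨2 / 3 * (y - 1 / 4), by linarith, by linarith, by congr 1; ring⟩
        · exact ⟨2 / 3 * (y + 7 / 4), by linarith, by linarith,
            by rw [← circ_add_two y]; congr 1; ring⟩
      obtain ⟨t, ht1, ht2, ht3⟩ := this
      obtain ⟨p, hp, hp'⟩ := sqRot_surjSq (armC_ne t) (q := (x, z)) (mem_Sq.2 ⟨h2, hz⟩)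
      refine ⟨(t, p), ⟨⟨ht1, ht2⟩, hp⟩, ?_⟩
      unfold armMap
      simp only [hp']
      rw [qT_eq]
      exact ⟨rfl, ht3, rfl⟩

/-! ### The untwisted cross as a thickened planar surface -/

/-- A piecewise linear parametrization of the unit circle of the sup norm by `[-1, 1]`, with
`±1` glued and `[-3/4, 3/4]` running over the right-hand side `{1} × [-1, 1]`. -/
def psi (u : ℝ) : ℝ × ℝ :=
  (max (-1) (min 1 (13 - 16 * |u|)),
    min (8 * (1 - u)) (max (-8 * (1 + u)) (max (-1) (min 1 (4 * u / 3)))))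

theorem continuous_psi : Continuous psi := by
  unfold psi
  fun_prop

theorem psi_mid {u : ℝ} (h1 : -(3 / 4) ≤ u) (h2 : u ≤ 3 / 4) : psi u = (1, 4 * u / 3) := by
  have : |u| ≤ 3 / 4 := abs_le.2 ⟨h1, h2⟩
  unfold psi
  rw [min_eq_left (a := (1 : ℝ)) (by linarith), max_eq_right (by norm_num),
    min_eq_right (a := (1 : ℝ)) (by linarith), max_eq_right (a := (-1 : ℝ)) (by linarith),
    max_eq_right (by linarith), min_eq_right (by linarith)]

theorem psi_top {u : ℝ} (h1 : 3 / 4 ≤ u) (h2 : u ≤ 7 / 8) : psi u = (13 - 16 * u, 1) := by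
  unfold psi
  rw [abs_of_nonneg (by linarith), min_eq_right (a := (1 : ℝ)) (by linarith),
    max_eq_right (by linarith),
    min_eq_left (a := (1 : ℝ)) (by linarith), max_eq_right (a := (-1 : ℝ)) (by linarith),
    max_eq_right (by linarith), min_eq_right (by linarith)]

theorem psi_left_up {u : ℝ} (h1 : 7 / 8 ≤ u) : psi u = (-1, 8 * (1 - u)) := by
  unfold psi
  rw [abs_of_nonneg (by linarith), min_eq_right (a := (1 : ℝ)) (by linarith),
    max_eq_left (by linarith),
    min_eq_left (a := (1 : ℝ)) (by linarith), max_eq_right (a := (-1 : ℝ)) (by linarith),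
    max_eq_right (by linarith), min_eq_left (by linarith)]

theorem psi_bot {u : ℝ} (h1 : -(7 / 8) ≤ u) (h2 : u ≤ -(3 / 4)) : psi u = (13 + 16 * u, -1) := by
  unfold psi
  rw [abs_of_nonpos (by linarith), min_eq_right (a := (1 : ℝ)) (by linarith),
    max_eq_right (by linarith),
    min_eq_right (a := (1 : ℝ)) (by linarith), max_eq_left (a := (-1 : ℝ)) (by linarith),
    max_eq_right (by linarith), min_eq_right (by linarith)]
  congr 1; ring

theorem psi_left_down {u : ℝ} (h1 : u ≤ -(7 / 8)) : psi u = (-1, -8 * (1 + u)) := by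
  unfold psi
  rw [abs_of_nonpos (by linarith), min_eq_right (a := (1 : ℝ)) (by linarith),
    max_eq_left (by linarith),
    min_eq_right (a := (1 : ℝ)) (by linarith), max_eq_left (a := (-1 : ℝ)) (by linarith),
    max_eq_left (by linarith), min_eq_right (by linarith)]

theorem psi_cases {u : ℝ} (h1 : -1 ≤ u) (h2 : u ≤ 1) :
    (-(3 / 4) ≤ u ∧ u ≤ 3 / 4 ∧ psi u = (1, 4 * u / 3)) ∨
    (3 / 4 < u ∧ u ≤ 7 / 8 ∧ psi u = (13 - 16 * u, 1)) ∨
    (7 / 8 < u ∧ u ≤ 1 ∧ psi u = (-1, 8 * (1 - u))) ∨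
    (-(7 / 8) ≤ u ∧ u < -(3 / 4) ∧ psi u = (13 + 16 * u, -1)) ∨
    (-1 ≤ u ∧ u < -(7 / 8) ∧ psi u = (-1, -8 * (1 + u))) := by
  rcases lt_or_ge u (-(7 / 8)) with h | h
  · exact .inr (.inr (.inr (.inr ⟨h1, h, psi_left_down h.le⟩)))
  rcases lt_or_ge u (-(3 / 4)) with h' | h'
  · exact .inr (.inr (.inr (.inl ⟨h, h', psi_bot h h'.le⟩)))
  rcases le_or_gt u (3 / 4) with h3 | h3
  · exact .inl ⟨h', h3, psi_mid h' h3⟩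
  rcases le_or_gt u (7 / 8) with h4 | h4
  · exact .inr (.inl ⟨h3, h4, psi_top h3.le h4⟩)
  · exact .inr (.inr (.inl ⟨h4, h2, psi_left_up h4.le⟩))

theorem norm_psi {u : ℝ} (h1 : -1 ≤ u) (h2 : u ≤ 1) : ‖psi u‖ = 1 := by
  have key : ∀ a b : ℝ, |a| ≤ 1 → |b| ≤ 1 → (|a| = 1 ∨ |b| = 1) → ‖((a, b) : ℝ × ℝ)‖ = 1 := by
    intro a b ha hb h
    rw [Prod.norm_def, Real.norm_eq_abs, Real.norm_eq_abs]
    rcases h with h | h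
    · rw [h]; exact max_eq_left hb
    · rw [h]; exact max_eq_right ha
  rcases psi_cases h1 h2 with ⟨h, h', e⟩ | ⟨h, h', e⟩ | ⟨h, h', e⟩ | ⟨h, h', e⟩ | ⟨h, h', e⟩ <;>
    rw [e] <;> apply key <;>
    first
    | (left; norm_num; done)
    | (right; norm_num)
    | (rw [abs_le]; constructor <;> linarith)

theorem psi_inj {u u' : ℝ} (h1 : -1 ≤ u) (h2 : u ≤ 1) (h1' : -1 ≤ u') (h2' : u' ≤ 1) :
    psi u = psi u' ↔ u = u' ∨ (|u| = 1 ∧ |u'| = 1) := by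
  constructor
  · intro H
    have hl : ∀ {a b : ℝ}, a = 1 → b = -1 → |a| = 1 ∧ |b| = 1 := by
      rintro _ _ rfl rfl; norm_num
    have hr : ∀ {a b : ℝ}, a = -1 → b = 1 → |a| = 1 ∧ |b| = 1 := by
      rintro _ _ rfl rfl; norm_num
    rcases psi_cases h1 h2 with ⟨h, h', e⟩ | ⟨h, h', e⟩ | ⟨h, h', e⟩ | ⟨h, h', e⟩ | ⟨h, h', e⟩ <;>
    rcases psi_cases h1' h2' with ⟨k, k', f⟩ | ⟨k, k', f⟩ | ⟨k, k', f⟩ | ⟨k, k', f⟩ | ⟨k, k', f⟩ <;>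
      rw [e, f, Prod.mk.injEq] at H <;> obtain ⟨H1, H2⟩ := H <;>
    first
    | (left; linarith)
    | (right; apply hl <;> linarith)
    | (right; apply hr <;> linarith)
  · rintro (rfl | ⟨h, h'⟩)
    · rfl
    · have e1 : psi 1 = (-1, 0) := by rw [psi_left_up (by norm_num)]; norm_num
      have e2 : psi (-1) = (-1, 0) := by rw [psi_left_down (by norm_num)]; norm_num
      rcases eq_or_eq_neg_of_abs_eq h with rfl | rfl <;>
        rcases eq_or_eq_neg_of_abs_eq h' with rfl | rfl <;> simp only [e1, e2]

theorem psi_surj {p : ℝ × ℝ} (hp : ‖p‖ = 1) : ∃ u ∈ Icc (-1 : ℝ) 1, psi u = p := by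
  obtain ⟨x, y⟩ := p
  rw [Prod.norm_def, Real.norm_eq_abs, Real.norm_eq_abs] at hp
  simp only at hp
  have hx := abs_le.1 (hp ▸ le_max_left |x| |y|)
  have hy := abs_le.1 (hp ▸ le_max_right |x| |y|)
  have h : |x| = 1 ∨ |y| = 1 := by
    rcases max_choice |x| |y| with h | h
    · left; rw [← h, hp]
    · right; rw [← h, hp]
  rcases h with h | h <;> rcases eq_or_eq_neg_of_abs_eq h with rfl | rfl
  · refine ⟨3 * y / 4, ⟨by linarith, by linarith⟩, ?_⟩
    rw [psi_mid (by linarith) (by linarith)]; congr 1; ring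
  · rcases le_total 0 y with k | k
    · refine ⟨1 - y / 8, ⟨by linarith, by linarith⟩, ?_⟩
      rw [psi_left_up (by linarith)]; congr 1; ring
    · refine ⟨-1 - y / 8, ⟨by linarith, by linarith⟩, ?_⟩
      rw [psi_left_down (by linarith)]; congr 1; ring
  · refine ⟨(13 - x) / 16, ⟨by linarith, by linarith⟩, ?_⟩
    rw [psi_top (by linarith) (by linarith)]; congr 1; ring
  · refine ⟨(x - 13) / 16, ⟨by linarith, by linarith⟩, ?_⟩
    rw [psi_bot (by linarith) (by linarith)]; congr 1; ring

/-- The square annulus `1/3 ≤ ‖p‖ ≤ 1`, thickened: the planar form of `bandMap`. -/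
def bandG (a : ℝ × ℝ × ℝ) : (ℝ × ℝ) × ℝ := ((2 / 3 + 4 * a.2.1 / 3) • psi a.1, a.2.2)

/-- First coordinate of the piecewise linear arc underlying `armG`. -/
def omx (t : ℝ) : ℝ := min 1 (min (4 * t) (4 * (1 - t)))

/-- Second coordinate of the piecewise linear arc underlying `armG`. -/
def omy (t : ℝ) : ℝ := max (-1) (min 1 (2 - 4 * t))

/-- A thickened planar band attached to the right-hand side of the square annulus: the planar
form of `armMap`. -/
def armG (a : ℝ × ℝ × ℝ) : (ℝ × ℝ) × ℝ :=
  ((1 + (1 + 4 * a.2.1 / 3) * omx a.1, (2 / 3 + 4 * a.2.1 / 3) * omy a.1), a.2.2)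

theorem continuous_bandG : Continuous bandG := by
  have := continuous_psi
  unfold bandG
  fun_prop

theorem continuous_armG : Continuous armG := by
  unfold armG omx omy
  fun_prop

theorem om_low {t : ℝ} (h2 : t ≤ 1 / 4) : omx t = 4 * t ∧ omy t = 1 := by
  unfold omx omy
  rw [min_eq_left (a := 4 * t) (by linarith), min_eq_right (by linarith),
    min_eq_left (by linarith), max_eq_right (by linarith)]
  exact ⟨rfl, rfl⟩

theorem om_mid {t : ℝ} (h1 : 1 / 4 ≤ t) (h2 : t ≤ 3 / 4) : omx t = 1 ∧ omy t = 2 - 4 * t := by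
  unfold omx omy
  rw [min_eq_left (a := 1) (le_min (by linarith) (by linarith)),
    min_eq_right (by linarith), max_eq_right (by linarith)]
  exact ⟨rfl, rfl⟩

theorem om_high {t : ℝ} (h1 : 3 / 4 ≤ t) : omx t = 4 * (1 - t) ∧ omy t = -1 := by
  unfold omx omy
  rw [min_eq_right (a := 4 * t) (by linarith), min_eq_right (a := 1) (by linarith),
    min_eq_right (by linarith), max_eq_left (by linarith)]
  exact ⟨rfl, rfl⟩

theorem om_cases (t : ℝ) :
    (t ≤ 1 / 4 ∧ omx t = 4 * t ∧ omy t = 1) ∨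
    (1 / 4 < t ∧ t < 3 / 4 ∧ omx t = 1 ∧ omy t = 2 - 4 * t) ∨
    (3 / 4 ≤ t ∧ omx t = 4 * (1 - t) ∧ omy t = -1) := by
  rcases le_or_gt t (1 / 4) with h | h
  · exact .inl ⟨h, om_low h⟩
  rcases lt_or_ge t (3 / 4) with h' | h'
  · exact .inr (.inl ⟨h, h', om_mid h.le h'.le⟩)
  · exact .inr (.inr ⟨h', om_high h'⟩)

theorem bandG_ker {u u' : ℝ} {p p' : ℝ × ℝ} (ha : (u, p) ∈ bandDom) (hb : (u', p') ∈ bandDom) :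
    bandG (u, p) = bandG (u', p') ↔ p = p' ∧ (u = u' ∨ (|u| = 1 ∧ |u'| = 1)) := by
  obtain ⟨⟨hu1, hu2⟩, hp⟩ := ha
  obtain ⟨⟨hu1', hu2'⟩, hp'⟩ := hb
  simp only at hu1 hu2 hu1' hu2' hp hp'
  obtain ⟨v, w⟩ := p
  obtain ⟨v', w'⟩ := p'
  have hv := abs_le.1 (mem_Sq.1 hp).1
  have hv' := abs_le.1 (mem_Sq.1 hp').1
  simp only at hv hv'
  rw [← psi_inj hu1 hu2 hu1' hu2']
  unfold bandG
  simp only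
  constructor
  · intro H
    obtain ⟨H1, rfl⟩ := Prod.mk.inj H
    have := congrArg norm H1
    rw [norm_smul, norm_smul, norm_psi hu1 hu2, norm_psi hu1' hu2', Real.norm_eq_abs,
      Real.norm_eq_abs, abs_of_pos (by linarith), abs_of_pos (by linarith)] at this
    have hvv : v = v' := by linarith
    subst hvv
    exact ⟨rfl, smul_right_injective _ (by linarith) H1⟩
  · rintro ⟨e, h⟩
    obtain ⟨rfl, rfl⟩ := Prod.mk.inj e
    rw [h]

/-- The width parameter of the planar band is recovered as `max (X - 1) (|Y| + 1/3)`. -/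
theorem armG_width {t s : ℝ} (h1 : -(1 / 4) ≤ s) :
    max ((1 + 4 * s / 3) * omx t) (|(2 / 3 + 4 * s / 3) * omy t| + 1 / 3) = 1 + 4 * s / 3 := by
  rw [abs_mul, abs_of_pos (show 0 < 2 / 3 + 4 * s / 3 by linarith)]
  rcases om_cases t with ⟨h, e, e'⟩ | ⟨h, h', e, e'⟩ | ⟨h, e, e'⟩
  · rw [e, e', abs_one, max_eq_right (by nlinarith)]; ring
  · rw [e, e']
    have : |2 - 4 * t| ≤ 1 := abs_le.2 ⟨by linarith, by linarith⟩
    rw [max_eq_left (by nlinarith)]; ring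
  · rw [e, e', abs_neg, abs_one, max_eq_right (by nlinarith)]; ring

theorem armG_ker {t t' : ℝ} {p p' : ℝ × ℝ} (ha : (t, p) ∈ armDom) (hb : (t', p') ∈ armDom) :
    armG (t, p) = armG (t', p') ↔ p = p' ∧ t = t' := by
  obtain ⟨⟨ht1, ht2⟩, hp⟩ := ha
  obtain ⟨⟨ht1', ht2'⟩, hp'⟩ := hb
  simp only at ht1 ht2 ht1' ht2' hp hp'
  obtain ⟨s, w⟩ := p
  obtain ⟨s', w'⟩ := p'
  have hs := abs_le.1 (mem_Sq.1 hp).1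
  have hs' := abs_le.1 (mem_Sq.1 hp').1
  simp only at hs hs'
  constructor
  · intro H
    unfold armG at H
    simp only at H
    obtain ⟨H1, rfl⟩ := Prod.mk.inj H
    obtain ⟨Hx, Hy⟩ := Prod.mk.inj H1
    have hw := armG_width (t := t) hs.1
    have hw' := armG_width (t := t') hs'.1
    rw [Hy, show (1 + 4 * s / 3) * omx t = (1 + 4 * s' / 3) * omx t' by linarith, hw'] at hw
    have hss : s = s' := by linarith
    subst hss
    have ex : omx t = omx t' :=
      mul_left_cancel₀ (show (1 + 4 * s / 3) ≠ 0 by linarith) (by linarith)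
    have ey : omy t = omy t' :=
      mul_left_cancel₀ (show (2 / 3 + 4 * s / 3) ≠ 0 by linarith) Hy
    refine ⟨rfl, ?_⟩
    rcases om_cases t with ⟨h, e, e'⟩ | ⟨h, h', e, e'⟩ | ⟨h, e, e'⟩ <;>
    rcases om_cases t' with ⟨k, f, f'⟩ | ⟨k, k', f, f'⟩ | ⟨k, f, f'⟩ <;>
      rw [e, f] at ex <;> rw [e', f'] at ey <;> linarith
  · rintro ⟨e, rfl⟩
    rw [e]

theorem bandG_armG_ker {u t : ℝ} {p p' : ℝ × ℝ} (ha : (u, p) ∈ bandDom)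
    (hb : (t, p') ∈ armDom) :
    bandG (u, p) = armG (t, p') ↔ p.1 = 1 / 4 ∧ p.2 = p'.2 ∧
      ((t = 0 ∧ u = 1 / 2 + p'.1) ∨ (t = 1 ∧ u = -(1 / 2) - p'.1)) := by
  obtain ⟨⟨hu1, hu2⟩, hp⟩ := ha
  obtain ⟨⟨ht1, ht2⟩, hp'⟩ := hb
  simp only at hu1 hu2 ht1 ht2 hp hp'
  obtain ⟨v, w⟩ := p
  obtain ⟨s, w'⟩ := p'
  have hv := abs_le.1 (mem_Sq.1 hp).1
  have hs := abs_le.1 (mem_Sq.1 hp').1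
  simp only at hv hs
  have hx0 : 0 ≤ omx t := le_min zero_le_one (le_min (by linarith) (by linarith))
  constructor
  · intro H
    unfold bandG armG at H
    simp only at H
    obtain ⟨H1, rfl⟩ := Prod.mk.inj H
    obtain ⟨Hx, Hy⟩ := Prod.mk.inj H1
    simp only [smul_eq_mul] at Hx Hy
    have hb1 : (psi u).1 ≤ 1 := max_le (by norm_num) (min_le_left _ _)
    have hprod : 0 ≤ (1 + 4 * s / 3) * omx t := mul_nonneg (by linarith) hx0
    have hle : (2 / 3 + 4 * v / 3) * (psi u).1 ≤ 2 / 3 + 4 * v / 3 := by nlinarith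
    have hv4 : v = 1 / 4 := by linarith
    subst hv4
    have e1 : (psi u).1 = 1 := by linarith
    have e0 : omx t = 0 := by
      have : (1 + 4 * s / 3) * omx t = 0 := by linarith
      rcases mul_eq_zero.1 this with h | h
      · linarith
      · exact h
    refine ⟨rfl, rfl, ?_⟩
    have hu : psi u = (1, 4 * u / 3) := by
      rcases psi_cases hu1 hu2 with ⟨h, h', e⟩ | ⟨h, h', e⟩ | ⟨h, h', e⟩ | ⟨h, h', e⟩ | ⟨h, h', e⟩
      · exact e
      all_goals exfalso; rw [e] at e1; simp only at e1; linarith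
    rw [hu] at Hy
    rcases om_cases t with ⟨h, e, e'⟩ | ⟨h, h', e, e'⟩ | ⟨h, e, e'⟩
    · rw [e'] at Hy; left; constructor <;> linarith
    · linarith
    · rw [e'] at Hy; right; constructor <;> linarith
  · rintro ⟨h1, h2, h3⟩
    simp only at h1 h2 h3
    subst h1 h2
    unfold bandG armG
    rcases h3 with ⟨rfl, rfl⟩ | ⟨rfl, rfl⟩
    · simp only
      rw [psi_mid (by linarith) (by linarith), (om_low (t := 0) (by norm_num)).1,
        (om_low (t := 0) (by norm_num)).2]
      simp only [Prod.smul_mk, smul_eq_mul]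
      congr 2 <;> ring
    · simp only
      rw [psi_mid (by linarith) (by linarith), (om_high (t := 1) (by norm_num)).1,
        (om_high (t := 1) (by norm_num)).2]
      simp only [Prod.smul_mk, smul_eq_mul]
      congr 2 <;> ring

/-- A rectangle with two open square holes. -/
def planarY0 : Set (ℝ × ℝ) :=
  {p | (-1 ≤ p.1 ∧ p.1 ≤ 7 / 3 ∧ |p.2| ≤ 1) ∧
    (1 / 3 ≤ |p.1| ∨ 1 / 3 ≤ |p.2|) ∧ (p.1 ≤ 1 ∨ 5 / 3 ≤ p.1 ∨ 1 / 3 ≤ |p.2|)}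

theorem image_bandG_armG :
    bandG '' bandDom ∪ armG '' armDom = planarY0 ×ˢ Icc (-(1 / 4)) (1 / 4) := by
  apply Subset.antisymm
  · rintro _ (⟨⟨u, v, w⟩, ⟨⟨hu1, hu2⟩, hp⟩, rfl⟩ | ⟨⟨t, s, w⟩, ⟨⟨ht1, ht2⟩, hp⟩, rfl⟩)
    · simp only at hu1 hu2 hp
      obtain ⟨hv, hw⟩ := mem_Sq.1 hp
      have hv' := abs_le.1 hv
      have hn : ‖(bandG (u, v, w)).1‖ = 2 / 3 + 4 * v / 3 := by
        unfold bandG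
        simp only
        simp only at hv'
        rw [norm_smul, norm_psi hu1 hu2, Real.norm_eq_abs, abs_of_pos (by linarith), mul_one]
      refine ⟨?_, abs_le.1 hw⟩
      generalize (bandG (u, v, w)).1 = q at hn
      obtain ⟨x, y⟩ := q
      rw [Prod.norm_def, Real.norm_eq_abs, Real.norm_eq_abs] at hn
      simp only at hn hv'
      have hx := le_max_left |x| |y|
      have hy := le_max_right |x| |y|
      have hx' := abs_le.1 (show |x| ≤ 1 by linarith)
      refine ⟨⟨hx'.1, by simp only; linarith, by simp only; linarith⟩, ?_, .inl hx'.2⟩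
      simp only
      rcases max_choice |x| |y| with h | h
      · left; linarith
      · right; linarith
    · simp only at ht1 ht2 hp
      obtain ⟨hs, hw⟩ := mem_Sq.1 hp
      have hs' := abs_le.1 hs
      simp only at hs'
      have hy : |(2 / 3 + 4 * s / 3) * omy t| = (2 / 3 + 4 * s / 3) * |omy t| := by
        rw [abs_mul, abs_of_pos (by linarith)]
      refine ⟨?_, abs_le.1 hw⟩
      simp only [planarY0, armG, mem_ofPred_eq]
      rw [hy]
      rcases om_cases t with ⟨h, e, e'⟩ | ⟨h, h', e, e'⟩ | ⟨h, e, e'⟩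
      · rw [e, e', abs_one]
        have : 0 ≤ (1 + 4 * s / 3) * (4 * t) := mul_nonneg (by linarith) (by linarith)
        refine ⟨⟨by linarith, by nlinarith, by linarith⟩, .inr (by linarith),
          .inr (.inr (by linarith))⟩
      · rw [e, e']
        have : |2 - 4 * t| ≤ 1 := abs_le.2 ⟨by linarith, by linarith⟩
        refine ⟨⟨by linarith, by nlinarith, by nlinarith⟩, .inl ?_, .inr (.inl (by linarith))⟩
        rw [abs_of_nonneg (by linarith)]; linarith
      · rw [e, e', abs_neg, abs_one]
        have : 0 ≤ (1 + 4 * s / 3) * (4 * (1 - t)) := mul_nonneg (by linarith) (by linarith)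
        refine ⟨⟨by linarith, by nlinarith, by linarith⟩, .inr (by linarith),
          .inr (.inr (by linarith))⟩
  · rintro ⟨⟨x, y⟩, w⟩ ⟨⟨⟨h1, h2, h3⟩, h4, h5⟩, hw⟩
    simp only at h1 h2 h3 h4 h5 hw
    have hw' : |w| ≤ 1 / 4 := abs_le.2 hw
    rcases le_or_gt x 1 with hx | hx
    · left
      have hxx : |x| ≤ 1 := abs_le.2 ⟨h1, hx⟩
      have hn1 : ‖((x, y) : ℝ × ℝ)‖ ≤ 1 := max_le hxx h3
      have hn2 : 1 / 3 ≤ ‖((x, y) : ℝ × ℝ)‖ := by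
        rcases h4 with h | h
        · exact h.trans (le_max_left _ _)
        · exact h.trans (le_max_right _ _)
      set n := ‖((x, y) : ℝ × ℝ)‖ with hn
      have hn0 : 0 < n := by linarith
      obtain ⟨u, hu, e⟩ := psi_surj (p := n⁻¹ • (x, y)) (by
        rw [norm_smul, ← hn, Real.norm_eq_abs, abs_of_pos (by positivity)]
        exact inv_mul_cancel₀ hn0.ne')
      refine ⟨(u, (n - 2 / 3) * 3 / 4, w), ⟨hu, mem_Sq.2 ⟨?_, hw'⟩⟩, ?_⟩
      · simp only; rw [abs_le]; constructor <;> linarith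
      · unfold bandG
        simp only
        rw [e, show 2 / 3 + 4 * ((n - 2 / 3) * 3 / 4) / 3 = n by ring, smul_inv_smul₀ hn0.ne']
    · right
      have h5' : 5 / 3 ≤ x ∨ 1 / 3 ≤ |y| := by
        rcases h5 with h | h | h
        · linarith
        · exact .inl h
        · exact .inr h
      -- `τ` is the width parameter and `t` the position along the band
      obtain ⟨τ, hτ1, hτ2, t, ht, e1, e2⟩ : ∃ τ : ℝ, 2 / 3 ≤ τ ∧ τ ≤ 4 / 3 ∧ ∃ t ∈ Icc (0 : ℝ) 1,
          τ * omx t = x - 1 ∧ (τ - 1 / 3) * omy t = y := by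
        rcases le_total (|y| + 1 / 3) (x - 1) with h | h
        · refine ⟨x - 1, ?_, by linarith, (2 - y / (x - 1 - 1 / 3)) / 4, ?_⟩
          · rcases h5' with h' | h' <;> linarith
          have hpos : 0 < x - 1 - 1 / 3 := by rcases h5' with h' | h' <;> linarith
          have hy := abs_le.1 (show |y / (x - 1 - 1 / 3)| ≤ 1 by
            rw [abs_div, abs_of_pos hpos, div_le_one hpos]; linarith)
          obtain ⟨e, e'⟩ := om_mid (t := (2 - y / (x - 1 - 1 / 3)) / 4) (by linarith) (by linarith)
          refine ⟨⟨by linarith, by linarith⟩, by rw [e, mul_one], ?_⟩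
          rw [e', show 2 - 4 * ((2 - y / (x - 1 - 1 / 3)) / 4) = y / (x - 1 - 1 / 3) by ring]
          exact mul_div_cancel₀ _ hpos.ne'
        · have hy3 : 1 / 3 ≤ |y| := by rcases h5' with h' | h' <;> linarith
          have hpos : 0 < |y| + 1 / 3 := by linarith
          have hq0 : 0 ≤ (x - 1) / (|y| + 1 / 3) := div_nonneg (by linarith) hpos.le
          have hq1 : (x - 1) / (|y| + 1 / 3) ≤ 1 := by rw [div_le_one hpos]; exact h
          refine ⟨|y| + 1 / 3, by linarith, by linarith, ?_⟩
          rcases le_total 0 y with hy | hy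
          · obtain ⟨e, e'⟩ := om_low (t := (x - 1) / (|y| + 1 / 3) / 4) (by linarith)
            refine ⟨(x - 1) / (|y| + 1 / 3) / 4, ⟨by linarith, by linarith⟩, ?_, ?_⟩
            · rw [e]; field_simp
            · rw [e', abs_of_nonneg hy]; ring
          · obtain ⟨e, e'⟩ := om_high (t := 1 - (x - 1) / (|y| + 1 / 3) / 4) (by linarith)
            refine ⟨1 - (x - 1) / (|y| + 1 / 3) / 4, ⟨by linarith, by linarith⟩, ?_, ?_⟩
            · rw [e]; field_simp; ring
            · rw [e', abs_of_nonpos hy]; ring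
      refine ⟨(t, (τ - 1) * 3 / 4, w), ⟨ht, mem_Sq.2 ⟨?_, hw'⟩⟩, ?_⟩
      · simp only; rw [abs_le]; constructor <;> linarith
      · unfold armG
        simp only
        rw [show 1 + 4 * ((τ - 1) * 3 / 4) / 3 = τ by ring,
          show 2 / 3 + 4 * ((τ - 1) * 3 / 4) / 3 = τ - 1 / 3 by ring, e1, e2]
        congr 2; ring

theorem cross_homeo_planar :
    Nonempty ((qT '' Klift) ≃ₜ (planarY0 ×ˢ Icc (-(1 / 4) : ℝ) (1 / 4) : Set ((ℝ × ℝ) × ℝ))) := by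
  rw [← image_band_arm, ← image_bandG_armG]
  refine union_homeo_of_ker isCompact_bandDom isCompact_armDom
    continuous_bandMap.continuousOn continuous_armMap.continuousOn
    continuous_bandG.continuousOn continuous_armG.continuousOn ?_ ?_ ?_
  · rintro ⟨u, p⟩ ha ⟨u', p'⟩ hb
    rw [bandMap_ker ha hb, bandG_ker ha hb]
  · rintro ⟨u, p⟩ ha ⟨u', p'⟩ hb
    rw [armMap_ker ha hb, armG_ker ha hb]
  · rintro ⟨u, p⟩ ha ⟨u', p'⟩ hb
    rw [bandMap_armMap_ker ha hb, bandG_armG_ker ha hb]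

/-! ### Radial homeomorphisms between star-shaped annuli -/

/-- The map moving each point along its ray from the origin that sends, on every ray, the segment
`{a ≤ 1 ≤ b}` affinely onto the segment `{a' ≤ 1 ≤ b'}`; here `a, b, a', b'` are positively
homogeneous, `a, a'` describing the outer and `b, b'` the inner boundary curves. -/
def rayMap (a b a' b' : ℝ × ℝ → ℝ) (p : ℝ × ℝ) : ℝ × ℝ :=
  ((1 - a p * (b p - 1) / (b p - a p)) / b' p + a p * (b p - 1) / (b p - a p) / a' p) • p

/-- `a < b` are the two homogeneous functions cutting out a star-shaped annulus
`{a ≤ 1 ≤ b}`. -/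
structure AnnularPair (a b : ℝ × ℝ → ℝ) : Prop where
  continuous_left : Continuous a
  continuous_right : Continuous b
  smul_left : ∀ (r : ℝ) (p : ℝ × ℝ), 0 ≤ r → a (r • p) = r * a p
  smul_right : ∀ (r : ℝ) (p : ℝ × ℝ), 0 ≤ r → b (r • p) = r * b p
  pos : ∀ p : ℝ × ℝ, p ≠ 0 → 0 < a p
  lt : ∀ p : ℝ × ℝ, p ≠ 0 → a p < b p

theorem AnnularPair.ne_zero {a b : ℝ × ℝ → ℝ} (h : AnnularPair a b) {p : ℝ × ℝ}
    (hp : 1 ≤ b p) : p ≠ 0 := by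
  rintro rfl
  have := h.smul_right 0 0 le_rfl
  rw [zero_smul, zero_mul] at this
  linarith

theorem rayMap_spec {a b a' b' : ℝ × ℝ → ℝ} (h : AnnularPair a b) (h' : AnnularPair a' b')
    {p : ℝ × ℝ} (hp : a p ≤ 1) (hp' : 1 ≤ b p) :
    a' (rayMap a b a' b' p) ≤ 1 ∧ 1 ≤ b' (rayMap a b a' b' p) ∧
      rayMap a' b' a b (rayMap a b a' b' p) = p ∧
      (a' (rayMap a b a' b' p) = 1 → a p = 1) := by
  have h0 := h.ne_zero hp'
  have ha := h.pos p h0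
  have hab := h.lt p h0
  have ha' := h'.pos p h0
  have hab' := h'.lt p h0
  set α := a p with hα
  set β := b p with hβ
  set α' := a' p with hα'
  set β' := b' p with hβ'
  have hβ0 : 0 < β := by linarith
  have hβ0' : 0 < β' := by linarith
  have hd : 0 < β - α := by linarith
  have hd' : 0 < β' - α' := by linarith
  set t := α * (β - 1) / (β - α) with ht
  have ht0 : 0 ≤ t := div_nonneg (mul_nonneg ha.le (by linarith)) hd.le
  have ht1 : t ≤ 1 := by
    rw [ht, div_le_one hd]; nlinarith
  set κ := (1 - t) / β' + t / α' with hκ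
  have hκ0 : 0 ≤ κ := add_nonneg (div_nonneg (by linarith) hβ0'.le) (div_nonneg ht0 ha'.le)
  have hF : rayMap a b a' b' p = κ • p := rfl
  have e1 : κ * α' = 1 - (1 - t) * (β' - α') / β' := by
    rw [hκ]; field_simp; ring
  have e2 : κ * β' = 1 + t * (β' - α') / α' := by
    rw [hκ]; field_simp; ring
  have hq : 0 ≤ (1 - t) * (β' - α') / β' :=
    div_nonneg (mul_nonneg (by linarith) hd'.le) hβ0'.le
  have hq' : 0 ≤ t * (β' - α') / α' := div_nonneg (mul_nonneg ht0 hd'.le) ha'.le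
  have hκ1 : 0 < κ := by
    rcases hκ0.lt_or_eq with h | h
    · exact h
    · rw [← h] at e2; linarith
  rw [hF]
  have ea : a' (κ • p) = κ * α' := h'.smul_left κ p hκ0
  have eb : b' (κ • p) = κ * β' := h'.smul_right κ p hκ0
  refine ⟨by rw [ea]; linarith, by rw [eb]; linarith, ?_, ?_⟩
  · unfold rayMap
    rw [ea, eb, h.smul_left κ p hκ0, h.smul_right κ p hκ0, ← hα, ← hβ, smul_smul]
    have et : κ * α' * (κ * β' - 1) / (κ * β' - κ * α') = t := by
      have e3 : α' * (κ * β' - 1) = t * (β' - α') := by rw [e2]; field_simp; ring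
      rw [mul_assoc, e3, ← mul_sub, mul_div_mul_left _ _ hκ1.ne', mul_div_cancel_right₀ _ hd'.ne']
    rw [et]
    have : ((1 - t) / (κ * β) + t / (κ * α)) * κ = 1 := by
      have e3 : t * (β - α) = α * (β - 1) := by rw [ht]; field_simp
      field_simp
      linarith
    rw [this, one_smul]
  · rw [ea, e1]
    intro h1
    have : (1 - t) * (β' - α') / β' = 0 := by linarith
    have h2 : (1 - t) * (β' - α') = 0 := by
      rcases div_eq_zero_iff.1 this with h | h
      · exact h
      · linarith
    have h3 : t = 1 := by
      rcases mul_eq_zero.1 h2 with h | h <;> linarith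
    rw [ht, div_eq_one_iff_eq hd.ne'] at h3
    have : β * (α - 1) = 0 := by linarith
    rcases mul_eq_zero.1 this with h | h <;> linarith

/-- On the outer boundary the radial map is the radial projection. -/
theorem rayMap_outer {a b a' b' : ℝ × ℝ → ℝ} (h : AnnularPair a b)
    {p : ℝ × ℝ} (hp : a p = 1) (hp' : 1 ≤ b p) :
    rayMap a b a' b' p = (a' p)⁻¹ • p := by
  have hab := h.lt p (h.ne_zero hp')
  rw [hp] at hab
  unfold rayMap
  rw [hp, one_mul, div_self (by linarith), sub_self, zero_div, zero_add, one_div]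

theorem continuousOn_rayMap {a b a' b' : ℝ × ℝ → ℝ} (h : AnnularPair a b)
    (h' : AnnularPair a' b') : ContinuousOn (rayMap a b a' b') {p | a p ≤ 1 ∧ 1 ≤ b p} := by
  have c1 := h.continuous_left.continuousOn (s := {p | a p ≤ 1 ∧ 1 ≤ b p})
  have c2 := h.continuous_right.continuousOn (s := {p | a p ≤ 1 ∧ 1 ≤ b p})
  have c3 := h'.continuous_left.continuousOn (s := {p | a p ≤ 1 ∧ 1 ≤ b p})
  have c4 := h'.continuous_right.continuousOn (s := {p | a p ≤ 1 ∧ 1 ≤ b p})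
  have ct : ContinuousOn (fun p => a p * (b p - 1) / (b p - a p)) {p | a p ≤ 1 ∧ 1 ≤ b p} :=
    (c1.mul (c2.sub continuousOn_const)).div (c2.sub c1) fun p hp => by
      have := h.lt p (h.ne_zero hp.2); linarith
  refine ContinuousOn.smul (ContinuousOn.add ((continuousOn_const.sub ct).div c4 ?_)
    (ct.div c3 ?_)) continuousOn_id
  · intro p hp
    have := h'.lt p (h.ne_zero hp.2); have := h'.pos p (h.ne_zero hp.2); linarith
  · intro p hp
    exact (h'.pos p (h.ne_zero hp.2)).ne'

/-! ### The model handlebody as a thickened planar surface -/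

/-- Sup-norm `1/4`-neighborhood of the disk bounded by the unit circle, cut off at `x = 1`. -/
def outerC : Set (ℝ × ℝ) :=
  {p | (max (|p.1| - 1 / 4) 0) ^ 2 + (max (|p.2| - 1 / 4) 0) ^ 2 ≤ 1 ∧ p.1 ≤ 1}

/-- The points inside the unit circle at sup-distance more than `1/4` from it. -/
def innerH : Set (ℝ × ℝ) := {p | (|p.1| + 1 / 4) ^ 2 + (|p.2| + 1 / 4) ^ 2 < 1}

theorem convex_outerC : Convex ℝ outerC := by
  have h1 : ConvexOn ℝ univ (fun p : ℝ × ℝ => |p.1|) :=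
    (convexOn_norm (E := ℝ) convex_univ).comp_linearMap (LinearMap.fst ℝ ℝ ℝ)
  have h2 : ConvexOn ℝ univ (fun p : ℝ × ℝ => |p.2|) :=
    (convexOn_norm (E := ℝ) convex_univ).comp_linearMap (LinearMap.snd ℝ ℝ ℝ)
  have k1 := ((h1.add_const (-(1 / 4))).sup (convexOn_const 0 convex_univ)).pow
    (fun p _ => le_max_right _ _) 2
  have k2 := ((h2.add_const (-(1 / 4))).sup (convexOn_const 0 convex_univ)).pow
    (fun p _ => le_max_right _ _) 2
  have k := (k1.add k2).convex_le 1
  have l : Convex ℝ {p : ℝ × ℝ | p.1 ≤ 1} := convex_halfSpace_le (LinearMap.fst ℝ ℝ ℝ).isLinear 1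
  intro p hp q hq u v hu hv huv
  have hk := k (x := p) ⟨mem_univ _, by simpa [sub_eq_add_neg] using hp.1⟩
    (y := q) ⟨mem_univ _, by simpa [sub_eq_add_neg] using hq.1⟩ hu hv huv
  exact ⟨by simpa [sub_eq_add_neg] using hk.2, l hp.2 hq.2 hu hv huv⟩

theorem convex_innerH : Convex ℝ innerH := by
  have h1 : ConvexOn ℝ univ (fun p : ℝ × ℝ => |p.1|) :=
    (convexOn_norm (E := ℝ) convex_univ).comp_linearMap (LinearMap.fst ℝ ℝ ℝ)
  have h2 : ConvexOn ℝ univ (fun p : ℝ × ℝ => |p.2|) :=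
    (convexOn_norm (E := ℝ) convex_univ).comp_linearMap (LinearMap.snd ℝ ℝ ℝ)
  have k1 := (h1.add_const (1 / 4)).pow (fun p _ => by simp only [Pi.add_apply]; positivity) 2
  have k2 := (h2.add_const (1 / 4)).pow (fun p _ => by simp only [Pi.add_apply]; positivity) 2
  have k := (k1.add k2).convex_lt 1
  intro p hp q hq u v hu hv huv
  have hp' : (|p.1| + 1 / 4) ^ 2 + (|p.2| + 1 / 4) ^ 2 < 1 := hp
  have hq' : (|q.1| + 1 / 4) ^ 2 + (|q.2| + 1 / 4) ^ 2 < 1 := hq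
  exact (k (x := p) ⟨mem_univ _, hp'⟩ (y := q) ⟨mem_univ _, hq'⟩ hu hv huv).2

theorem isOpen_innerH : IsOpen innerH := isOpen_lt (by fun_prop) (by fun_prop)

theorem isClosed_outerC : IsClosed outerC := by
  unfold outerC
  rw [ofPred_and]
  exact (isClosed_le (by fun_prop) (by fun_prop)).inter (isClosed_le (by fun_prop) (by fun_prop))

theorem zero_mem_innerH : (0 : ℝ × ℝ) ∈ innerH := by
  simp only [innerH, mem_ofPred_eq, Prod.fst_zero, Prod.snd_zero, abs_zero]; norm_num

/-- Points of the closed hole are interior to the outer region. -/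
theorem closure_innerH_subset : closure innerH ⊆ interior outerC := by
  have hc : closure innerH ⊆ {p : ℝ × ℝ | (|p.1| + 1 / 4) ^ 2 + (|p.2| + 1 / 4) ^ 2 ≤ 1} :=
    closure_minimal (fun p hp => (show _ < (1 : ℝ) from hp).le) (isClosed_le (by fun_prop) (by fun_prop))
  have ho : IsOpen {p : ℝ × ℝ |
      (max (|p.1| - 1 / 4) 0) ^ 2 + (max (|p.2| - 1 / 4) 0) ^ 2 < 1 ∧ p.1 < 1} := by
    rw [ofPred_and]
    exact (isOpen_lt (by fun_prop) (by fun_prop)).inter (isOpen_lt (by fun_prop) (by fun_prop))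
  refine (hc.trans ?_).trans (interior_maximal (fun p hp => ⟨hp.1.le, hp.2.le⟩) ho)
  rintro ⟨x, y⟩ h
  simp only [mem_ofPred_eq] at h ⊢
  have hx := abs_nonneg x
  have hy := abs_nonneg y
  have m : ∀ z : ℝ, 0 ≤ z → (max (z - 1 / 4) 0) ^ 2 < (z + 1 / 4) ^ 2 := by
    intro z hz
    apply pow_lt_pow_left₀ _ (le_max_right _ _) (by norm_num)
    exact max_lt (by linarith) (by linarith)
  have m1 := m _ hx
  have m2 := m _ hy
  refine ⟨by linarith, ?_⟩
  have := le_abs_self x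
  nlinarith

theorem innerH_nhds : innerH ∈ 𝓝 (0 : ℝ × ℝ) := isOpen_innerH.mem_nhds zero_mem_innerH

theorem outerC_nhds : outerC ∈ 𝓝 (0 : ℝ × ℝ) :=
  Filter.mem_of_superset innerH_nhds
    (subset_closure.trans (closure_innerH_subset.trans interior_subset))

theorem outerC_abs {p : ℝ × ℝ} (hp : p ∈ outerC) : |p.1| ≤ 5 / 4 ∧ |p.2| ≤ 5 / 4 := by
  have h := hp.1
  have m1 := le_max_left (|p.1| - 1 / 4) 0
  have m2 := le_max_left (|p.2| - 1 / 4) 0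
  have n1 := le_max_right (|p.1| - 1 / 4) 0
  have n2 := le_max_right (|p.2| - 1 / 4) 0
  constructor <;> nlinarith

theorem isBounded_outerC : Bornology.IsBounded outerC := by
  refine (isBounded_closedBall (x := (0 : ℝ × ℝ)) (r := 5 / 4)).subset fun p hp => ?_
  rw [mem_closedBall_zero_iff, Prod.norm_def]
  exact max_le (outerC_abs hp).1 (outerC_abs hp).2

theorem annular_gauge : AnnularPair (gauge outerC) (gauge innerH) where
  continuous_left := continuous_gauge convex_outerC outerC_nhds
  continuous_right := continuous_gauge convex_innerH innerH_nhds
  smul_left r p hr := by rw [gauge_smul_of_nonneg hr, smul_eq_mul]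
  smul_right r p hr := by rw [gauge_smul_of_nonneg hr, smul_eq_mul]
  pos p hp := (gauge_pos (absorbent_nhds_zero outerC_nhds)
    ((NormedSpace.isVonNBounded_iff ℝ).2 isBounded_outerC)).2 hp
  lt p hp := by
    have ha : 0 < gauge outerC p := (gauge_pos (absorbent_nhds_zero outerC_nhds)
      ((NormedSpace.isVonNBounded_iff ℝ).2 isBounded_outerC)).2 hp
    by_contra! h
    -- after rescaling, `p` lies in the closed hole but on the outer boundary
    have h1 : gauge innerH ((gauge outerC p)⁻¹ • p) ≤ 1 := by
      rw [gauge_smul_of_nonneg (by positivity), smul_eq_mul, inv_mul_le_one₀ ha]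
      exact h
    have h2 := (gauge_lt_one_iff_mem_interior convex_outerC outerC_nhds).2
      (closure_innerH_subset ((gauge_le_one_iff_mem_closure convex_innerH innerH_nhds).1 h1))
    rw [gauge_smul_of_nonneg (by positivity), smul_eq_mul, inv_mul_cancel₀ ha.ne'] at h2
    exact lt_irrefl _ h2

theorem gauge_outerC_le {p : ℝ × ℝ} : gauge outerC p ≤ 1 ↔ p ∈ outerC := by
  rw [gauge_le_one_iff_mem_closure convex_outerC outerC_nhds, isClosed_outerC.closure_eq]

theorem le_gauge_innerH {p : ℝ × ℝ} : 1 ≤ gauge innerH p ↔ p ∉ innerH := by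
  rw [← not_lt, gauge_lt_one_iff_mem_interior convex_innerH innerH_nhds,
    isOpen_innerH.interior_eq]

/-- The left half of the planar model surface, as a star-shaped annulus. -/
def halfA : Set (ℝ × ℝ) := {p | gauge outerC p ≤ 1 ∧ 1 ≤ gauge innerH p}

theorem mem_halfA {p : ℝ × ℝ} : p ∈ halfA ↔ p ∈ outerC ∧ p ∉ innerH := by
  rw [halfA, mem_ofPred_eq, gauge_outerC_le, le_gauge_innerH]

theorem isCompact_halfA : IsCompact halfA := by
  refine isCompact_of_isClosed_isBounded ?_ (isBounded_outerC.subset fun p hp =>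
    (mem_halfA.1 hp).1)
  have : halfA = outerC ∩ innerHᶜ := by
    ext p; rw [mem_halfA]; rfl
  rw [this]
  exact isClosed_outerC.inter isOpen_innerH.isClosed_compl

/-- Half the length of the slice of the planar model surface at `x = 1`. -/
def cc : ℝ := 1 / 4 + √7 / 4

theorem cc_pos : 0 < cc := by unfold cc; positivity

theorem one_mem_outerC {y : ℝ} : ((1, y) : ℝ × ℝ) ∈ outerC ↔ |y| ≤ cc := by
  have h7 : √7 * √7 = 7 := Real.mul_self_sqrt (by norm_num)
  have h0 := Real.sqrt_nonneg 7
  simp only [outerC, mem_ofPred_eq, abs_one, le_refl, and_true, cc]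
  rw [max_eq_left (a := (1 : ℝ) - 1 / 4) (by norm_num)]
  constructor
  · intro h
    have := le_max_left (|y| - 1 / 4) 0
    have := le_max_right (|y| - 1 / 4) 0
    nlinarith
  · intro h
    have h1 : max (|y| - 1 / 4) 0 ≤ √7 / 4 := max_le (by linarith) (by linarith)
    have := le_max_right (|y| - 1 / 4) 0
    nlinarith

/-- Homogeneous function of the rectangle `[-3/2, 1] × [-cc, cc]`. -/
def boxA (p : ℝ × ℝ) : ℝ := max (max (-(2 / 3 * p.1)) p.1) (|p.2| / cc)

/-- Homogeneous function of the rectangle `[-1/2, 1/2] × [-cc/3, cc/3]`. -/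
def boxB (p : ℝ × ℝ) : ℝ := max (2 * |p.1|) (3 * (|p.2| / cc))

theorem annular_box : AnnularPair boxA boxB where
  continuous_left := by unfold boxA; fun_prop
  continuous_right := by unfold boxB; fun_prop
  smul_left r p hr := by
    simp only [boxA, Prod.smul_fst, Prod.smul_snd, smul_eq_mul, abs_mul, abs_of_nonneg hr]
    rw [mul_max_of_nonneg _ _ hr, mul_max_of_nonneg _ _ hr]
    congr 2 <;> ring
  smul_right r p hr := by
    simp only [boxB, Prod.smul_fst, Prod.smul_snd, smul_eq_mul, abs_mul, abs_of_nonneg hr]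
    rw [mul_max_of_nonneg _ _ hr]
    congr 1 <;> ring
  pos p hp := by
    unfold boxA
    by_contra! h
    obtain ⟨h12, h3⟩ := max_le_iff.1 h
    obtain ⟨h1, h2⟩ := max_le_iff.1 h12
    apply hp
    have h4 : |p.2| ≤ 0 := by
      rw [div_le_iff₀ cc_pos, zero_mul] at h3; exact h3
    exact Prod.ext (by simp only [Prod.fst_zero]; linarith) (abs_nonpos_iff.1 h4)
  lt p hp := by
    unfold boxA boxB
    have hy : 0 ≤ |p.2| / cc := div_nonneg (abs_nonneg _) cc_pos.le
    have hx := abs_nonneg p.1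
    have hx1 := le_abs_self p.1
    have hx2 := neg_abs_le p.1
    have hpos : 0 < |p.1| ∨ 0 < |p.2| / cc := by
      by_contra! h
      apply hp
      have h4 : |p.2| ≤ 0 := by
        have := h.2
        rw [div_le_iff₀ cc_pos, zero_mul] at this; exact this
      exact Prod.ext (abs_nonpos_iff.1 h.1) (abs_nonpos_iff.1 h4)
    rcases le_total (2 * |p.1|) (3 * (|p.2| / cc)) with h | h
    · rw [max_eq_right h]
      have : 0 < |p.2| / cc := by rcases hpos with h' | h' <;> linarith
      refine max_lt (max_lt ?_ ?_) ?_ <;> linarith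
    · rw [max_eq_left h]
      have : 0 < |p.1| := by rcases hpos with h' | h' <;> linarith
      refine max_lt (max_lt ?_ ?_) ?_ <;> linarith

/-- The radial homeomorphism of `halfA` onto the left half of `planarY0`. -/
def halfF (p : ℝ × ℝ) : ℝ × ℝ :=
  (2 / 3 * (rayMap (gauge outerC) (gauge innerH) boxA boxB p).1,
    (rayMap (gauge outerC) (gauge innerH) boxA boxB p).2 / cc)

theorem continuousOn_halfF : ContinuousOn halfF halfA := by
  have h := continuousOn_rayMap annular_gauge annular_box
  exact (continuousOn_const.mul (continuous_fst.comp_continuousOn h)).prodMk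
    ((continuous_snd.comp_continuousOn h).div_const _)

theorem halfF_inj {p q : ℝ × ℝ} (hp : p ∈ halfA) (hq : q ∈ halfA) (h : halfF p = halfF q) :
    p = q := by
  obtain ⟨h1, h2⟩ := Prod.mk.inj h
  have e : rayMap (gauge outerC) (gauge innerH) boxA boxB p =
      rayMap (gauge outerC) (gauge innerH) boxA boxB q :=
    Prod.ext (by linarith) ((div_left_inj' cc_pos.ne').1 h2)
  rw [← (rayMap_spec annular_gauge annular_box hp.1 hp.2).2.2.1,
    ← (rayMap_spec annular_gauge annular_box hq.1 hq.2).2.2.1, e]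

theorem image_halfF : halfF '' halfA =
    {p | (-1 ≤ p.1 ∧ p.1 ≤ 2 / 3 ∧ |p.2| ≤ 1) ∧ (1 / 3 ≤ |p.1| ∨ 1 / 3 ≤ |p.2|)} := by
  have key : ∀ x y : ℝ, (boxA (x, y) ≤ 1 ∧ 1 ≤ boxB (x, y)) ↔
      (-1 ≤ 2 / 3 * x ∧ 2 / 3 * x ≤ 2 / 3 ∧ |y / cc| ≤ 1) ∧
        (1 / 3 ≤ |2 / 3 * x| ∨ 1 / 3 ≤ |y / cc|) := by
    intro x y
    simp only [boxA, boxB, max_le_iff, le_max_iff]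
    rw [abs_mul, abs_div, abs_of_pos cc_pos, abs_of_pos (show (0 : ℝ) < 2 / 3 by norm_num)]
    constructor
    · rintro ⟨⟨⟨h1, h2⟩, h3⟩, h4⟩
      refine ⟨⟨by linarith, by linarith, h3⟩, ?_⟩
      rcases h4 with h | h
      · left; linarith
      · right; linarith
    · rintro ⟨⟨h1, h2, h3⟩, h4⟩
      refine ⟨⟨⟨by linarith, by linarith⟩, h3⟩, ?_⟩
      rcases h4 with h | h
      · left; linarith
      · right; linarith
  apply Subset.antisymm
  · rintro _ ⟨p, hp, rfl⟩
    have h := rayMap_spec annular_gauge annular_box hp.1 hp.2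
    exact (key _ _).1 ⟨h.1, h.2.1⟩
  · rintro ⟨x, y⟩ h
    have hc := cc_pos.ne'
    have h' : boxA (3 / 2 * x, y * cc) ≤ 1 ∧ 1 ≤ boxB (3 / 2 * x, y * cc) := by
      rw [key, mul_div_cancel_right₀ _ hc, show 2 / 3 * (3 / 2 * x) = x by ring]
      exact h
    have hs := rayMap_spec annular_box annular_gauge h'.1 h'.2
    refine ⟨_, ⟨hs.1, hs.2.1⟩, ?_⟩
    unfold halfF
    rw [hs.2.2.1]
    simp only
    rw [mul_div_cancel_right₀ _ hc, show 2 / 3 * (3 / 2 * x) = x by ring]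

/-- The radial homeomorphism matches the two gluing intervals. -/
theorem halfF_interface {p : ℝ × ℝ} (hp : p ∈ halfA) : (halfF p).1 = 2 / 3 ↔ p.1 = 1 := by
  have hs := rayMap_spec annular_gauge annular_box hp.1 hp.2
  have h0 := annular_gauge.ne_zero hp.2
  have hb0 := annular_box.pos p h0
  obtain ⟨x, y⟩ := p
  constructor
  · intro h
    have h1 : (rayMap (gauge outerC) (gauge innerH) boxA boxB (x, y)).1 = 1 := by
      simp only [halfF] at h; linarith
    have h2 : boxA (rayMap (gauge outerC) (gauge innerH) boxA boxB (x, y)) = 1 := by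
      apply le_antisymm hs.1
      rw [← h1]
      exact (le_max_right _ _).trans (le_max_left _ _)
    have h3 := hs.2.2.2 h2
    rw [rayMap_outer annular_gauge h3 hp.2] at h1
    simp only [Prod.smul_mk, smul_eq_mul] at h1
    have hx : x = boxA (x, y) := by
      field_simp at h1
      exact h1
    have hx0 : 0 < x := hx ▸ hb0
    have hy : |y| / cc ≤ x := by
      conv_rhs => rw [hx]
      exact le_max_right _ _
    have hmem : ((1, y / x) : ℝ × ℝ) ∈ outerC := by
      rw [one_mem_outerC, abs_div, abs_of_pos hx0, div_le_iff₀ hx0, mul_comm,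
        ← div_le_iff₀ cc_pos]
      exact hy
    have h4 : gauge outerC (x, y) ≤ x := by
      apply gauge_le_of_mem hx0.le
      refine ⟨(1, y / x), hmem, ?_⟩
      simp only [Prod.smul_mk, smul_eq_mul, mul_one]
      rw [mul_div_cancel₀ _ hx0.ne']
    have h5 : x ≤ 1 := (mem_halfA.1 hp).1.2
    simp only
    linarith
  · rintro rfl
    have hy := one_mem_outerC.1 (mem_halfA.1 hp).1
    have hA : boxA (1, y) = 1 := by
      simp only [boxA]
      rw [max_eq_right (b := (1 : ℝ)) (by norm_num), max_eq_left ((div_le_one cc_pos).2 hy)]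
    have hg : gauge outerC (1, y) = 1 := by
      apply le_antisymm hp.1
      by_contra! hlt
      -- otherwise `(1, y)` could be pushed slightly beyond `x = 1` inside `outerC`
      have hpos := annular_gauge.pos _ h0
      have hm : gauge outerC ((gauge outerC (1, y))⁻¹ • (1, y)) ≤ 1 := by
        rw [gauge_smul_of_nonneg (by positivity), smul_eq_mul, inv_mul_cancel₀ hpos.ne']
      have h1 := (gauge_outerC_le.1 hm).2
      simp only [Prod.smul_mk, smul_eq_mul, mul_one] at h1
      have := (one_lt_inv₀ hpos).2 hlt
      linarith
    unfold halfF
    rw [rayMap_outer annular_gauge hg hp.2, hA]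
    simp

/-- The planar model surface: two copies of `halfA` glued along their side on `x = 1`. -/
def modelN : Set (ℝ × ℝ) := id '' halfA ∪ (fun p : ℝ × ℝ => (2 - p.1, p.2)) '' halfA

theorem modelN_homeo_planar : Nonempty (modelN ≃ₜ planarY0) := by
  have hY : planarY0 = halfF '' halfA ∪
      (fun p : ℝ × ℝ => (4 / 3 - (halfF p).1, (halfF p).2)) '' halfA := by
    have e : (fun p : ℝ × ℝ => (4 / 3 - (halfF p).1, (halfF p).2)) '' halfA =
        (fun p : ℝ × ℝ => (4 / 3 - p.1, p.2)) '' (halfF '' halfA) := by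
      rw [image_image]
    rw [e, image_halfF]
    ext ⟨x, y⟩
    simp only [planarY0, mem_ofPred_eq, mem_union, mem_image, Prod.exists, Prod.mk.injEq]
    constructor
    · rintro ⟨⟨h1, h2, h3⟩, h4, h5⟩
      rcases le_total x (2 / 3) with h | h
      · exact .inl ⟨⟨h1, h, h3⟩, h4⟩
      · refine .inr ⟨4 / 3 - x, y, ⟨⟨by linarith, by linarith, h3⟩, ?_⟩, by ring, rfl⟩
        rcases h5 with h5 | h5 | h5
        · left; exact le_trans (by linarith) (le_abs_self _)
        · left; exact le_trans (by linarith) (neg_le_abs _)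
        · exact .inr h5
    · rintro (⟨⟨h1, h2, h3⟩, h4⟩ | ⟨x', y', ⟨⟨h1, h2, h3⟩, h4⟩, rfl, rfl⟩)
      · exact ⟨⟨h1, by linarith, h3⟩, h4, .inl (by linarith)⟩
      · refine ⟨⟨by linarith, by linarith, h3⟩, .inl ?_, ?_⟩
        · exact le_trans (by linarith) (le_abs_self _)
        · rcases h4 with h4 | h4
          · rcases le_abs'.1 h4 with h | h
            · right; left; linarith
            · left; linarith
          · exact .inr (.inr h4)
  rw [hY]
  have hc1 : ContinuousOn (fun p : ℝ × ℝ => (4 / 3 - (halfF p).1, (halfF p).2)) halfA :=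
    (continuousOn_const.sub (continuous_fst.comp_continuousOn continuousOn_halfF)).prodMk
      (continuous_snd.comp_continuousOn continuousOn_halfF)
  refine union_homeo_of_ker isCompact_halfA isCompact_halfA continuousOn_id (by fun_prop)
    continuousOn_halfF hc1 ?_ ?_ ?_
  · intro p hp q hq
    exact ⟨fun h => congrArg halfF h, halfF_inj hp hq⟩
  · intro p hp q hq
    constructor
    · intro h
      obtain ⟨h1, h2⟩ := Prod.mk.inj h
      rw [show p = q from Prod.ext (by linarith) h2]
    · intro h
      obtain ⟨h1, h2⟩ := Prod.mk.inj h
      rw [halfF_inj hp hq (Prod.ext (by linarith) h2)]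
  · intro p hp q hq
    have hp1 : p.1 ≤ 1 := (mem_halfA.1 hp).1.2
    have hq1 : q.1 ≤ 1 := (mem_halfA.1 hq).1.2
    have hF : ∀ r ∈ halfA, (halfF r).1 ≤ 2 / 3 := by
      intro r hr
      have : halfF r ∈ halfF '' halfA := mem_image_of_mem _ hr
      rw [image_halfF] at this
      exact this.1.2.1
    constructor
    · intro h
      have h1 : p.1 = 2 - q.1 := congrArg Prod.fst h
      have h2 : p.2 = q.2 := (Prod.ext_iff.1 h).2
      have hq' : q.1 = 1 := by linarith
      have e := (halfF_interface hq).2 hq'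
      rw [show p = q from Prod.ext (by linarith) h2]
      exact Prod.ext (by simp only; linarith) rfl
    · intro h
      have h1 : (halfF p).1 = 4 / 3 - (halfF q).1 := congrArg Prod.fst h
      have h2 : (halfF p).2 = (halfF q).2 := (Prod.ext_iff.1 h).2
      have k1 := hF p hp
      have k2 := hF q hq
      have e := (halfF_interface hq).1 (by linarith)
      rw [halfF_inj hp hq (Prod.ext (by linarith) h2)]
      exact Prod.ext (by simp only [id]; linarith) rfl

/-- A point of `ℝ²` is within sup-distance `1/4` of the unit circle as soon as its closed square
neighborhood reaches both sides of the circle. -/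
theorem exists_circle_point {x y : ℝ}
    (h1 : (max (|x| - 1 / 4) 0) ^ 2 + (max (|y| - 1 / 4) 0) ^ 2 ≤ 1)
    (h2 : 1 ≤ (|x| + 1 / 4) ^ 2 + (|y| + 1 / 4) ^ 2) :
    ∃ q : ℝ × ℝ, q.1 ^ 2 + q.2 ^ 2 = 1 ∧ |x - q.1| ≤ 1 / 4 ∧ |y - q.2| ≤ 1 / 4 := by
  -- move along the segment from the nearest to the farthest point of the square
  let m : ℝ → ℝ → ℝ := fun z s => (1 - s) * max (|z| - 1 / 4) 0 + s * (|z| + 1 / 4)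
  have hm : ∀ z s : ℝ, s ∈ Icc (0 : ℝ) 1 → |(|z| - m z s)| ≤ 1 / 4 := by
    intro z s hs
    have a1 := le_max_left (|z| - 1 / 4) 0
    have a2 : max (|z| - 1 / 4) 0 ≤ |z| + 1 / 4 := max_le (by linarith) (by positivity)
    obtain ⟨hs0, hs1⟩ := hs
    simp only [m]
    rw [abs_le]
    constructor <;> nlinarith
  have hcont : ContinuousOn (fun s => (m x s) ^ 2 + (m y s) ^ 2) (Icc 0 1) := by
    apply Continuous.continuousOn
    simp only [m]
    fun_prop
  obtain ⟨s, hs, e⟩ := intermediate_value_Icc (zero_le_one' ℝ) hcont (show (1 : ℝ) ∈ _ by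
    simp only [m]
    constructor
    · simpa using h1
    · simpa using h2)
  have hz : ∀ z : ℝ, ∃ w : ℝ, w ^ 2 = (m z s) ^ 2 ∧ |z - w| ≤ 1 / 4 := by
    intro z
    have h := hm z s hs
    rcases le_total 0 z with hz | hz
    · rw [abs_of_nonneg hz] at h
      exact ⟨m z s, rfl, h⟩
    · refine ⟨-m z s, by ring, ?_⟩
      rw [← abs_neg, show -(z - -m z s) = |z| - m z s by rw [abs_of_nonpos hz]; ring]
      exact h
  obtain ⟨w1, e1, k1⟩ := hz x
  obtain ⟨w2, e2, k2⟩ := hz y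
  exact ⟨(w1, w2), by simp only [e1, e2]; exact e, k1, k2⟩

theorem near_circle_mem {x y a b : ℝ} (hq : a ^ 2 + b ^ 2 = 1) (h1 : |x - a| ≤ 1 / 4)
    (h2 : |y - b| ≤ 1 / 4) (hx : x ≤ 1) : ((x, y) : ℝ × ℝ) ∈ halfA := by
  have e1 : |x| - |a| ≤ 1 / 4 := (abs_sub_abs_le_abs_sub x a).trans h1
  have e2 : |y| - |b| ≤ 1 / 4 := (abs_sub_abs_le_abs_sub y b).trans h2
  have f1 : |a| - |x| ≤ 1 / 4 := by
    rw [abs_sub_comm] at h1; exact (abs_sub_abs_le_abs_sub a x).trans h1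
  have f2 : |b| - |y| ≤ 1 / 4 := by
    rw [abs_sub_comm] at h2; exact (abs_sub_abs_le_abs_sub b y).trans h2
  have ea := sq_abs a
  have eb := sq_abs b
  have ha := abs_nonneg a
  have hb := abs_nonneg b
  refine mem_halfA.2 ⟨⟨?_, hx⟩, ?_⟩
  · simp only
    have k1 : (max (|x| - 1 / 4) 0) ^ 2 ≤ |a| ^ 2 :=
      pow_le_pow_left₀ (le_max_right _ _) (max_le (by linarith) ha) 2
    have k2 : (max (|y| - 1 / 4) 0) ^ 2 ≤ |b| ^ 2 :=
      pow_le_pow_left₀ (le_max_right _ _) (max_le (by linarith) hb) 2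
    linarith
  · simp only [innerH, mem_ofPred_eq, not_lt]
    have k1 : |a| ^ 2 ≤ (|x| + 1 / 4) ^ 2 := pow_le_pow_left₀ ha (by linarith) 2
    have k2 : |b| ^ 2 ≤ (|y| + 1 / 4) ^ 2 := pow_le_pow_left₀ hb (by linarith) 2
    linarith

theorem near_circle_mem_modelN {x y a b : ℝ} (hq : a ^ 2 + b ^ 2 = 1) (h1 : |x - a| ≤ 1 / 4)
    (h2 : |y - b| ≤ 1 / 4) : ((x, y) : ℝ × ℝ) ∈ halfA ∨ ((2 - x, y) : ℝ × ℝ) ∈ halfA := by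
  rcases le_or_gt x 1 with hx | hx
  · exact .inl (near_circle_mem hq h1 h2 hx)
  · right
    -- near the tangency point, the reflected point is close to the same point of the circle
    have h1' := abs_le.1 h1
    have ha : a ≤ 1 := by nlinarith [sq_nonneg b]
    refine near_circle_mem hq ?_ h2 (by linarith)
    rw [abs_le]; constructor <;> linarith

theorem model_eq_prod : ModelHandlebody 2 = modelN ×ˢ Icc (-(1 / 4)) (1 / 4) := by
  have hcl : IsClosed (chainCircles 2) := by
    unfold chainCircles
    refine isClosed_biUnion_finset fun i _ => ?_
    rw [ofPred_and]
    exact (isClosed_eq (by fun_prop) (by fun_prop)).inter (isClosed_eq (by fun_prop) (by fun_prop))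
  have hmem : ∀ p : (ℝ × ℝ) × ℝ, p ∈ chainCircles 2 ↔
      (p.1.1 ^ 2 + p.1.2 ^ 2 = 1 ∧ p.2 = 0) ∨ ((p.1.1 - 2) ^ 2 + p.1.2 ^ 2 = 1 ∧ p.2 = 0) := by
    intro p
    simp [chainCircles, Finset.range_add_one]
    tauto
  rw [ModelHandlebody, if_neg (by norm_num), hcl.cthickening_eq_biUnion_closedBall (by norm_num)]
  ext ⟨⟨x, y⟩, z⟩
  simp only [mem_iUnion, mem_closedBall, Prod.dist_eq, Real.dist_eq, max_le_iff, exists_prop,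
    mem_prod, hmem, modelN, image_id, mem_union]
  constructor
  · rintro ⟨⟨⟨a, b⟩, c⟩, h, ⟨h1, h2⟩, h3⟩
    simp only at h h1 h2 h3
    have hc : c = 0 := by rcases h with h | h <;> exact h.2
    subst hc
    rw [sub_zero] at h3
    refine ⟨?_, abs_le.1 h3⟩
    have : ((x, y) : ℝ × ℝ) ∈ halfA ∨ ((2 - x, y) : ℝ × ℝ) ∈ halfA := by
      rcases h with h | h
      · exact near_circle_mem_modelN h.1 h1 h2
      · have h' : (2 - a) ^ 2 + b ^ 2 = 1 := by rw [← h.1]; ring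
        have := near_circle_mem_modelN (x := 2 - x) h' (by
          rw [abs_sub_comm, show 2 - a - (2 - x) = x - a by ring]; exact h1) h2
        rw [sub_sub_cancel] at this
        exact this.symm
    rcases this with h | h
    · exact .inl h
    · exact .inr ⟨_, h, by simp⟩
  · rintro ⟨h, hz⟩
    have hA : ∀ x y : ℝ, ((x, y) : ℝ × ℝ) ∈ halfA →
        ∃ q : ℝ × ℝ, q.1 ^ 2 + q.2 ^ 2 = 1 ∧ |x - q.1| ≤ 1 / 4 ∧ |y - q.2| ≤ 1 / 4 := by
      intro x y h
      obtain ⟨k1, k2⟩ := mem_halfA.1 h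
      simp only [innerH, mem_ofPred_eq, not_lt] at k2
      exact exists_circle_point k1.1 k2
    have hz' : |z - 0| ≤ 1 / 4 := by rw [sub_zero]; exact abs_le.2 hz
    rcases h with h | ⟨⟨x', y'⟩, h, e⟩
    · obtain ⟨q, hq, h1, h2⟩ := hA x y h
      exact ⟨(q, 0), .inl ⟨hq, rfl⟩, ⟨h1, h2⟩, hz'⟩
    · obtain ⟨rfl, rfl⟩ := Prod.mk.inj e
      obtain ⟨q, hq, h1, h2⟩ := hA x' y' h
      refine ⟨((2 - q.1, q.2), 0), .inr ⟨?_, rfl⟩, ⟨?_, h2⟩, hz'⟩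
      · simp only; rw [← hq]; ring
      · simp only
        rw [abs_sub_comm, show 2 - q.1 - (2 - x') = x' - q.1 by ring]
        exact h1

theorem Vcut_handlebody : IsHandlebody Vcut 2 := by
  obtain ⟨e1⟩ := Vcut_homeo_cross
  obtain ⟨e2⟩ := cross_homeo_planar
  obtain ⟨e3⟩ := modelN_homeo_planar
  unfold IsHandlebody
  rw [model_eq_prod]
  exact ⟨(e1.trans e2).trans ((Homeomorph.Set.prod _ _).trans
    ((e3.symm.prodCongr (Homeomorph.refl _)).trans (Homeomorph.Set.prod _ _).symm))⟩

/-- Cutting `V` along `D` yields a genus two handlebody `V'`, in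
which `∂E` separates `∂V'` into two once-punctured tori `T₁` and `T₂`, and `V'` is
homeomorphic to `T₁ × I`. -/
theorem cut_along_D_is_genus_two_and_product :
    IsHandlebody Vcut 2 ∧
    ∃ T1 T2 : Set T3,
      T1 ∪ T2 = frontier Vcut ∧ T1 ∩ T2 = bdE ∧
      IsOncePuncturedTorus T1 ∧ IsOncePuncturedTorus T2 ∧
      Nonempty (Vcut ≃ₜ T1 × (Icc (0 : ℝ) 1)) := by
  exact ⟨Vcut_handlebody, qT '' T1lift, qT '' T2lift, T1_union_T2, T1_inter_T2, T1_punc, T2_punc,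
    Vcut_homeo_prod⟩

end
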